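/- arXiv:1811.08946 — 3 statements merged into one kernel-verified Lean document; each statement's English description precedes it below -/
import Mathlib

section
/- Let k be a field and let T̄ = {(x,y) ∈ ℝ² : x + y ≥ 0} be the upper-triangular subposet of ℝ². Every pointwise finite-dimensional, middle exact persistence module N : T̄ → Vec_k is isomorphic to a direct sum of modules of the form k_{J ∩ T̄}, where each J ⊆ ℝ² is a block, together with interval modules k_{{p}} for points p on the anti-diagonal x + y = 0. -/
namespace PMod

variable (k : Type) [Field k]

/-- A persistence module over a preordered set `P` with values in `k`-vector spaces. -/
structure PersistenceModule (P : Type) [Preorder P] where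
  V : P → Type
  [addCommGroup : ∀ x, AddCommGroup (V x)]
  [module : ∀ x, Module k (V x)]
  map : ∀ {x y : P}, x ≤ y → (V x →ₗ[k] V y)
  map_refl : ∀ x : P, map (le_refl x) = LinearMap.id
  map_trans : ∀ {x y z : P} (hxy : x ≤ y) (hyz : y ≤ z),
      map (le_trans hxy hyz) = (map hyz).comp (map hxy)

attribute [instance] PersistenceModule.addCommGroup PersistenceModule.module

variable {k}

/-- A morphism of persistence modules. -/
structure Hom {P : Type} [Preorder P] (M N : PersistenceModule k P) where
  app : ∀ x, M.V x →ₗ[k] N.V x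
  natural : ∀ {x y : P} (h : x ≤ y), (N.map h).comp (app x) = (app y).comp (M.map h)

/-- A morphism of persistence modules is an isomorphism iff it is pointwise bijective. -/
def IsIsoHom {P : Type} [Preorder P] {M N : PersistenceModule k P} (f : Hom M N) : Prop :=
  ∀ x, Function.Bijective (f.app x)

/-- Two persistence modules are isomorphic if there is a pointwise bijective
morphism between them. -/
def Isomorphic {P : Type} [Preorder P] (M N : PersistenceModule k P) : Prop :=
  ∃ f : Hom M N, IsIsoHom f

/-- The direct sum of a family of persistence modules, taken pointwise
(`Π₀` is the finitely supported product, i.e. the direct sum). -/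
noncomputable def directSum {P : Type} [Preorder P] {ι : Type}
    (N : ι → PersistenceModule k P) : PersistenceModule k P where
  V x := Π₀ i, (N i).V x
  map {x y} h := DFinsupp.mapRange.linearMap (fun i => (N i).map h)
  map_refl x := by
    have h : (fun i => (N i).map (le_refl x)) =
        fun i => (LinearMap.id : (N i).V x →ₗ[k] (N i).V x) :=
      funext fun i => (N i).map_refl x
    rw [h]
    exact DFinsupp.mapRange.linearMap_id
  map_trans {x y z} hxy hyz := by
    have h : (fun i => (N i).map (le_trans hxy hyz)) =
        fun i => ((N i).map hyz).comp ((N i).map hxy) :=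
      funext fun i => (N i).map_trans hxy hyz
    rw [h]
    exact DFinsupp.mapRange.linearMap_comp _ _

/-- The binary direct sum of two persistence modules, taken pointwise. -/
def sum2 {P : Type} [Preorder P] (M N : PersistenceModule k P) : PersistenceModule k P where
  V x := M.V x × N.V x
  map h := (M.map h).prodMap (N.map h)
  map_refl x := by
    rw [M.map_refl, N.map_refl]
    exact LinearMap.prodMap_id
  map_trans hxy hyz := by
    rw [M.map_trans hxy hyz, N.map_trans hxy hyz]
    exact (LinearMap.prodMap_comp _ _ _ _).symm

/-- The zero persistence module predicate. -/
def IsZero {P : Type} [Preorder P] (M : PersistenceModule k P) : Prop :=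
  ∀ x, ∀ v : M.V x, v = 0

/-- A persistence module is indecomposable if it is nonzero and whenever it is
isomorphic to a direct sum of two modules, one of the summands is zero. -/
def Indecomposable {P : Type} [Preorder P] (M : PersistenceModule k P) : Prop :=
  ¬ IsZero M ∧ ∀ M' M'' : PersistenceModule k P,
    Isomorphic M (sum2 M' M'') → IsZero M' ∨ IsZero M''

variable (k)

/-- A subset of a preordered set is convex. -/
def IsConvex {P : Type} [Preorder P] (I : Set P) : Prop :=
  ∀ p q r : P, p ≤ q → q ≤ r → p ∈ I → r ∈ I → q ∈ I

open Classical in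
/-- The fibre of the interval module `k_I` at `x`: a copy of `k` if `x ∈ I`, else `0`. -/
noncomputable def kMod {P : Type} [Preorder P] (I : Set P) (x : P) : Submodule k k :=
  if x ∈ I then ⊤ else ⊥

/-- The canonical generator of the fibre of the interval module at a point of `I`. -/
noncomputable def kGen {P : Type} [Preorder P] {I : Set P} {x : P} (hx : x ∈ I) :
    kMod k I x :=
  ⟨1, by simp [kMod, hx]⟩

open Classical in
/-- The structure maps of the interval module. -/
noncomputable def intervalMap {P : Type} [Preorder P] (I : Set P) {x y : P} (_ : x ≤ y) :
    kMod k I x →ₗ[k] kMod k I y where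
  toFun m := if hy : y ∈ I then ⟨(m : k), by simp [kMod, hy]⟩ else 0
  map_add' a b := by
    by_cases hy : y ∈ I <;> simp [hy]
  map_smul' c a := by
    by_cases hy : y ∈ I <;> simp [hy]

theorem kMod_coe_eq_zero {P : Type} [Preorder P] {I : Set P} {x : P} (hx : x ∉ I)
    (m : kMod k I x) : (m : k) = 0 := by
  have hm := m.2
  simp only [kMod, if_neg hx, Submodule.mem_bot] at hm
  exact hm

/-- The interval module `k_I` of a convex subset `I ⊆ P`: one-dimensional with
identity structure maps on `I`, and zero outside of `I`. -/
noncomputable def intervalModule {P : Type} [Preorder P] (I : Set P) (hI : IsConvex I) :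
    PersistenceModule k P where
  V x := kMod k I x
  map h := intervalMap k I h
  map_refl x := by
    ext m
    by_cases hx : x ∈ I
    · simp [intervalMap, hx]
    · simp [intervalMap, hx, kMod_coe_eq_zero k hx m]
  map_trans {x y z} hxy hyz := by
    ext m
    by_cases hz : z ∈ I
    · by_cases hy : y ∈ I
      · simp [intervalMap, hz, hy]
      · have hx : x ∉ I := fun hx => hy (hI x y z hxy hyz hx hz)
        simp [intervalMap, hz, hy, kMod_coe_eq_zero k hx m]
    · by_cases hy : y ∈ I <;> simp [intervalMap, hz, hy]

/-- The constant persistence module `k_P` with value `k` everywhere. -/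
def constModule (P : Type) [Preorder P] : PersistenceModule k P where
  V _ := k
  map _ := LinearMap.id
  map_refl _ := rfl
  map_trans _ _ := rfl

variable {k}

/-- Connectedness of a subset of a preordered set: any two points are joined by
a finite zigzag of comparable points inside the subset. -/
def IsConn {P : Type} [Preorder P] (I : Set P) : Prop :=
  ∀ p ∈ I, ∀ q ∈ I, ∃ (n : ℕ) (r : ℕ → P), r 0 = p ∧ r n = q ∧ (∀ i ≤ n, r i ∈ I) ∧
    ∀ i < n, r i ≤ r (i + 1) ∨ r (i + 1) ≤ r i

/-- An interval in a poset: a nonempty convex connected subset. -/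
def IsInterval {P : Type} [Preorder P] (I : Set P) : Prop :=
  I.Nonempty ∧ IsConvex I ∧ IsConn I

/-- An ideal: a subset closed under going down. -/
def IsIdeal {P : Type} [Preorder P] (I : Set P) : Prop :=
  ∀ p q : P, p ≤ q → q ∈ I → p ∈ I

/-- A filter: a subset closed under going up. -/
def IsFilter {P : Type} [Preorder P] (I : Set P) : Prop :=
  ∀ p q : P, p ≤ q → p ∈ I → q ∈ I

/-- An interval in a totally ordered set: a nonempty convex subset. -/
def IsIntervalLin {P : Type} [Preorder P] (I : Set P) : Prop :=
  I.Nonempty ∧ IsConvex I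

theorem IsConvex.prod {S T : Type} [Preorder S] [Preorder T] {A : Set S} {B : Set T}
    (hA : IsConvex A) (hB : IsConvex B) : IsConvex (A ×ˢ B) := by
  intro p q r hpq hqr hp hr
  exact ⟨hA _ _ _ hpq.1 hqr.1 hp.1 hr.1, hB _ _ _ hpq.2 hqr.2 hp.2 hr.2⟩

theorem isConvex_univ {P : Type} [Preorder P] : IsConvex (Set.univ : Set P) :=
  fun _ _ _ _ _ _ _ => trivial

/-- A block in the product of two totally ordered sets. -/
def IsBlock {S T : Type} [LinearOrder S] [LinearOrder T] (I : Set (S × T)) : Prop :=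
  I.Nonempty ∧ (
    (∃ JS JT, IsIntervalLin JS ∧ IsIdeal JS ∧ IsIntervalLin JT ∧ IsIdeal JT ∧ I = JS ×ˢ JT) ∨
    (∃ JS JT, IsIntervalLin JS ∧ IsFilter JS ∧ IsIntervalLin JT ∧ IsFilter JT ∧ I = JS ×ˢ JT) ∨
    (∃ JS, IsIntervalLin JS ∧ I = JS ×ˢ (Set.univ : Set T)) ∨
    (∃ JT, IsIntervalLin JT ∧ I = (Set.univ : Set S) ×ˢ JT))

theorem IsBlock.isConvex {S T : Type} [LinearOrder S] [LinearOrder T] {I : Set (S × T)}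
    (h : IsBlock I) : IsConvex I := by
  obtain ⟨-, h | h | h | h⟩ := h
  · obtain ⟨JS, JT, hS, -, hT, -, rfl⟩ := h
    exact hS.2.prod hT.2
  · obtain ⟨JS, JT, hS, -, hT, -, rfl⟩ := h
    exact hS.2.prod hT.2
  · obtain ⟨JS, hS, rfl⟩ := h
    exact hS.2.prod isConvex_univ
  · obtain ⟨JT, hT, rfl⟩ := h
    exact isConvex_univ.prod hT.2

/-- Convexity is inherited by preimages in a subposet. -/
theorem IsConvex.preimage {P : Type} [Preorder P] {J : Set P} (hJ : IsConvex J)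
    (Q : Set P) : IsConvex {p : Q | (p : P) ∈ J} :=
  fun p q r hpq hqr hp hr => hJ p q r hpq hqr hp hr

/-- The restriction of a persistence module to a subposet. -/
def restrict {P : Type} [Preorder P] (M : PersistenceModule k P) (Q : Set P) :
    PersistenceModule k Q where
  V q := M.V q
  map h := M.map h
  map_refl q := M.map_refl q
  map_trans hxy hyz := M.map_trans hxy hyz

/-- Middle exactness for persistence modules over a product of two totally ordered sets:
for every rectangle `a = (x,y) ≤ b = (x,y'), c = (x',y) ≤ d = (x',y')` the sequence
`M_a → M_b ⊕ M_c → M_d` is exact at `M_b ⊕ M_c`. -/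
def MiddleExact {S T : Type} [Preorder S] [Preorder T]
    (M : PersistenceModule k (S × T)) : Prop :=
  ∀ (x x' : S) (y y' : T) (hx : x ≤ x') (hy : y ≤ y')
    (mb : M.V (x, y')) (mc : M.V (x', y)),
    M.map (show (x, y') ≤ (x', y') from ⟨hx, le_refl y'⟩) mb =
      M.map (show (x', y) ≤ (x', y') from ⟨le_refl x', hy⟩) mc →
    ∃ ma : M.V (x, y),
      M.map (show (x, y) ≤ (x, y') from ⟨le_refl x, hy⟩) ma = mb ∧
      M.map (show (x, y) ≤ (x', y) from ⟨hx, le_refl y⟩) ma = mc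


theorem IsIdeal.isConvex {P : Type} [Preorder P] {I : Set P} (h : IsIdeal I) : IsConvex I :=
  fun _ q r _ hqr _ hr => h q r hqr hr

theorem IsFilter.isConvex {P : Type} [Preorder P] {I : Set P} (h : IsFilter I) : IsConvex I :=
  fun p q _ hpq _ hp _ => h p q hpq hp


/-- Convexity of the preimage of a convex subset of `T` in a subposet of `S × T`. -/
theorem IsConvex.preimageSnd {S T : Type} [Preorder S] [Preorder T] {J : Set T}
    (hJ : IsConvex J) (Q : Set (S × T)) : IsConvex {p : ↥Q | (p : S × T).2 ∈ J} :=
  fun p q r hpq hqr hp hr =>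
    hJ _ _ _ (Subtype.coe_le_coe.mpr hpq).2 (Subtype.coe_le_coe.mpr hqr).2 hp hr

end PMod

namespace PMod

/-- The strictly upper-triangular subset of the plane. -/
def upperT : Set (ℝ × ℝ) := {p | 0 < p.1 + p.2}

/-- The upper-triangular subset of the plane. -/
def upperTbar : Set (ℝ × ℝ) := {p | 0 ≤ p.1 + p.2}

/-- Middle exactness for a persistence module over a subposet `Q ⊆ ℝ²`: for every
rectangle `a = (x,y)`, `b = (x,y')`, `c = (x',y)`, `d = (x',y')` with all corners in
`Q`, the sequence `M_a → M_b ⊕ M_c → M_d` is exact at `M_b ⊕ M_c`. -/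
def MiddleExactSub {k : Type} [Field k] (Q : Set (ℝ × ℝ))
    (M : PersistenceModule k ↥Q) : Prop :=
  ∀ (x x' y y' : ℝ) (hx : x ≤ x') (hy : y ≤ y')
    (ha : (x, y) ∈ Q) (hb : (x, y') ∈ Q) (hc : (x', y) ∈ Q) (hd : (x', y') ∈ Q),
    ∀ (mb : M.V ⟨(x, y'), hb⟩) (mc : M.V ⟨(x', y), hc⟩),
      M.map (show (⟨(x, y'), hb⟩ : ↥Q) ≤ ⟨(x', y'), hd⟩ from
        Subtype.mk_le_mk.mpr ⟨hx, le_refl y'⟩) mb =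
      M.map (show (⟨(x', y), hc⟩ : ↥Q) ≤ ⟨(x', y'), hd⟩ from
        Subtype.mk_le_mk.mpr ⟨le_refl x', hy⟩) mc →
      ∃ ma : M.V ⟨(x, y), ha⟩,
        M.map (show (⟨(x, y), ha⟩ : ↥Q) ≤ ⟨(x, y'), hb⟩ from
          Subtype.mk_le_mk.mpr ⟨le_refl x, hy⟩) ma = mb ∧
        M.map (show (⟨(x, y), ha⟩ : ↥Q) ≤ ⟨(x', y), hc⟩ from
          Subtype.mk_le_mk.mpr ⟨hx, le_refl y⟩) ma = mc

/-- Convexity of the preimage in a subposet of a convex subset of `ℝ²`. -/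
theorem IsConvex.preimageSub {J : Set (ℝ × ℝ)} (hJ : IsConvex J) (Q : Set (ℝ × ℝ)) :
    IsConvex {p : ↥Q | (p : ℝ × ℝ) ∈ J} :=
  fun p q r hpq hqr hp hr =>
    hJ _ _ _ (Subtype.coe_le_coe.mpr hpq) (Subtype.coe_le_coe.mpr hqr) hp hr

end PMod

/-!
Pointwise finite-dimensional modules are direct sums of indecomposables: a maximal commuting family
of idempotent endomorphisms splits the module into joint eigenspaces. Since a nonzero retract of an
indecomposable is all of it, it remains to split a block module off every nonzero middle exact `N`.
Choose a vector `m`, nonzero and minimal with respect to a suitable filtration by kernels or images: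

* if some vector dies both when pushed to the right and when pushed upwards, then `m` is supported
  on a death block;
* otherwise, if some vector dies to the right, then `m` spans a vertical band, and by reflection a
  vector dying upwards gives a horizontal band;
* otherwise all structure maps are injective, and the places of birth of `m` in the colimit of `N`
  form a birth block.

On a finite grid, middle exactness extends the images of `m` to a compatible family; linear
compactness of products of finite-dimensional spaces passes from finite grids to all of the poset,
and likewise produces the functionals that split the block off.

No summand supported on an anti-diagonal point has to be treated separately: `{p}` is the trace on
the upper triangle of the death block `Iic p.1 ×ˢ Iic p.2`.
-/

namespace PMod

open Module

section LinearAlgebra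

variable {k : Type*} [Field k] {V : Type*} [AddCommGroup V] [Module k V]

theorem exists_dual_apply_eq {I : Type*} (a : I → V) (b : I → k)
    (h : ∀ c : I →₀ k, Finsupp.linearCombination k a c = 0 → Finsupp.linearCombination k b c = 0) :
    ∃ ξ : Dual k V, ∀ i, ξ (a i) = b i := by
  have hb : Finsupp.linearCombination k b ∈
      LinearMap.range (Finsupp.linearCombination k a).dualMap := by
    rw [LinearMap.range_dualMap_eq_dualAnnihilator_ker, Submodule.mem_dualAnnihilator]
    exact h
  obtain ⟨ξ, hξ⟩ := hb
  refine ⟨ξ, fun i => ?_⟩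
  simpa using LinearMap.congr_fun hξ (Finsupp.single i 1)

theorem exists_ne_zero_forall_notMem_eq_bot [FiniteDimensional k V] {ι : Type*} [LinearOrder ι]
    {F : ι → Submodule k V} (hF : Monotone F) (h : ∃ i, F i ≠ ⊥) :
    ∃ i, ∃ m ∈ F i, m ≠ 0 ∧ ∀ j, m ∉ F j → F j = ⊥ := by
  obtain ⟨_, ⟨⟨i, rfl⟩, hi⟩, hmin⟩ := exists_minimal_of_wellFoundedLT
    (fun W : Submodule k V => W ∈ Set.range F ∧ W ≠ ⊥)
    (let ⟨i, hi⟩ := h; ⟨F i, ⟨i, rfl⟩, hi⟩)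
  obtain ⟨m, hm, hm0⟩ := Submodule.exists_mem_ne_zero_of_ne_bot hi
  refine ⟨i, m, hm, hm0, fun j hmj => ?_⟩
  have hji : F j ≤ F i := (le_total j i).elim (hF ·) fun hij => absurd (hF hij hm) hmj
  by_contra hj
  exact hmj (hmin ⟨⟨j, rfl⟩, hj⟩ hji hm)

theorem exists_mem_of_mem_iSup_of_directed {ι : Type*} {p : ι → Submodule k V}
    (hp : Directed (· ≤ ·) p) {x : V} (hx0 : x ≠ 0) (hx : x ∈ ⨆ i, p i) : ∃ i, x ∈ p i := by
  cases isEmpty_or_nonempty ι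
  · exact absurd (by simpa only [iSup_of_empty, Submodule.mem_bot] using hx) hx0
  · exact (Submodule.mem_iSup_of_directed p hp).1 hx

theorem linearMap_ext_of_iSup_eq_top {V' ι : Type*} [AddCommGroup V'] [Module k V']
    {W : ι → Submodule k V} (hW : ⨆ i, W i = ⊤) {f g : V →ₗ[k] V'}
    (hfg : ∀ i, ∀ w ∈ W i, f w = g w) : f = g := by
  have : ⨆ i, W i ≤ LinearMap.eqLocus f g := iSup_le hfg
  exact LinearMap.ext fun v => this (hW ▸ Submodule.mem_top)

end LinearAlgebra

section CommutingIdempotents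

variable {k : Type*} [Field k] {V : Type*} [AddCommGroup V] [Module k V]

theorem eigenspace_sup_eigenspace_eq_top {e : End k V} (he : IsIdempotentElem e) :
    e.eigenspace 0 ⊔ e.eigenspace 1 = ⊤ := by
  rw [eq_top_iff]
  intro v _
  have hev : e (e v) = e v := LinearMap.congr_fun he v
  rw [← sub_add_cancel v (e v)]
  refine Submodule.add_mem_sup ?_ ?_ <;> simp [hev]

theorem maxGenEigenspace_eq_eigenspace {e : End k V} (he : IsIdempotentElem e) (c : k) :
    e.maxGenEigenspace c = e.eigenspace c := by
  have hcop : IsCoprime (Polynomial.X - Polynomial.C (0 : k)) (Polynomial.X - Polynomial.C 1) :=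
    Polynomial.isCoprime_X_sub_C_of_isUnit_sub (by simp)
  have hsq : Squarefree ((Polynomial.X - Polynomial.C (0 : k)) *
      (Polynomial.X - Polynomial.C (1 : k))) :=
    (Polynomial.separable_X_sub_C.mul Polynomial.separable_X_sub_C hcop).squarefree
  have hss : e.IsSemisimple := End.isSemisimple_of_squarefree_aeval_eq_zero hsq <| by
    simp [mul_sub, he.eq]
  exact hss.isFinitelySemisimple.maxGenEigenspace_eq_eigenspace c

variable {ι : Type*} {e : ι → End k V}

theorem iSupIndep_iInf_eigenspace (he : ∀ i, IsIdempotentElem (e i))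
    (hcomm : ∀ i j, Commute (e i) (e j)) :
    iSupIndep fun χ : ι → k => ⨅ i, (e i).eigenspace (χ i) := by
  simpa only [maxGenEigenspace_eq_eigenspace (he _)] using
    End.independent_iInf_maxGenEigenspace_of_forall_mapsTo e
      fun i j => End.mapsTo_maxGenEigenspace_of_comm (hcomm j i)

theorem iSup_iInf_eigenspace_eq_top [FiniteDimensional k V] (he : ∀ i, IsIdempotentElem (e i))
    (hcomm : ∀ i j, Commute (e i) (e j)) :
    ⨆ χ : ι → k, ⨅ i, (e i).eigenspace (χ i) = ⊤ := by
  simp only [← maxGenEigenspace_eq_eigenspace (he _)]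
  refine End.iSup_iInf_maxGenEigenspace_eq_top_of_iSup_maxGenEigenspace_eq_top_of_commute e
    (fun i j _ => hcomm i j) fun i => top_unique ?_
  rw [← eigenspace_sup_eigenspace_eq_top (he i)]
  simp only [maxGenEigenspace_eq_eigenspace (he i)]
  exact sup_le (le_iSup (e i).eigenspace 0) (le_iSup (e i).eigenspace 1)

theorem exists_maximal_commuting {A : Type*} [Mul A] (s : Set A) :
    ∃ t ⊆ s, (∀ a ∈ t, ∀ b ∈ t, Commute a b) ∧ ∀ a ∈ s, (∀ b ∈ t, Commute a b) → a ∈ t := by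
  obtain ⟨t, ht⟩ := zorn_subset {t | t ⊆ s ∧ ∀ a ∈ t, ∀ b ∈ t, Commute a b} (by
    refine fun c hc hchain => ⟨⋃₀ c, ⟨Set.sUnion_subset fun t ht => (hc ht).1, ?_⟩,
      fun t ht => Set.subset_sUnion_of_mem ht⟩
    rintro a ⟨t, ht, ha⟩ b ⟨u, hu, hb⟩
    rcases hchain.total ht hu with h | h
    exacts [(hc hu).2 a (h ha) b hb, (hc ht).2 a ha b (h hb)])
  refine ⟨t, ht.prop.1, ht.prop.2, fun a ha hat => ?_⟩
  refine ht.le_of_ge (y := insert a t) ⟨Set.insert_subset ha ht.prop.1, ?_⟩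
    (Set.subset_insert a t) (Set.mem_insert a t)
  rintro b (rfl | hb) c (rfl | hc)
  exacts [Commute.refl _, hat c hc, (hat b hb).symm, ht.prop.2 b hb c hc]

end CommutingIdempotents

section LinearCompactness

variable {k X : Type*} [Field k] {V : X → Type*} [∀ x, AddCommGroup (V x)] [∀ x, Module k (V x)]

variable (k V) in
/-- The linear functionals on `∏ x, V x` that depend on only finitely many coordinates. -/
def finitaryDual : Submodule k (Dual k (∀ x, V x)) :=
  ⨆ x, LinearMap.range (LinearMap.proj x : (∀ x, V x) →ₗ[k] V x).dualMap

theorem comp_proj_mem_finitaryDual {x : X} (f : Dual k (V x)) :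
    f ∘ₗ LinearMap.proj x ∈ finitaryDual k V :=
  Submodule.mem_iSup_of_mem x ⟨f, rfl⟩

variable (k) in
/-- A subset of `∏ x, V x` is linearly closed if it is the solution set of a system of affine
equations, each of which involves only finitely many coordinates: the closed affine subspaces
of the product of the discrete spaces `V x`. -/
def IsLinearlyClosed (A : Set (∀ x, V x)) : Prop :=
  ∃ G : Set (Dual k (∀ x, V x) × k),
    (∀ γ ∈ G, γ.1 ∈ finitaryDual k V) ∧ ∀ v, v ∈ A ↔ ∀ γ ∈ G, γ.1 v = γ.2

theorem IsLinearlyClosed.forall {ι : Sort*} {p : ι → (∀ x, V x) → Prop}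
    (h : ∀ i, IsLinearlyClosed k {v | p i v}) : IsLinearlyClosed k {v | ∀ i, p i v} := by
  choose G hfin hG using h
  refine ⟨⋃ i, G i, fun γ hγ => ?_, fun v => ?_⟩
  · obtain ⟨i, hi⟩ := Set.mem_iUnion.1 hγ
    exact hfin i γ hi
  · simp only [Set.mem_ofPred_eq] at hG
    simp only [Set.mem_ofPred_eq, hG, Set.mem_iUnion, forall_exists_index]
    exact forall_comm

theorem IsLinearlyClosed.and {p q : (∀ x, V x) → Prop} (hp : IsLinearlyClosed k {v | p v})
    (hq : IsLinearlyClosed k {v | q v}) : IsLinearlyClosed k {v | p v ∧ q v} := by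
  obtain ⟨G, hfin, hG⟩ := hp
  obtain ⟨G', hfin', hG'⟩ := hq
  refine ⟨G ∪ G', fun γ hγ => hγ.elim (hfin γ) (hfin' γ), fun v => ?_⟩
  simp only [Set.mem_ofPred_eq] at hG hG'
  simp only [Set.mem_ofPred_eq, hG, hG', Set.mem_union, or_imp, forall_and]

theorem isLinearlyClosed_setOf_apply_eq {W : Type*} [AddCommGroup W] [Module k W]
    {L : (∀ x, V x) →ₗ[k] W} (hL : ∀ f : Dual k W, f ∘ₗ L ∈ finitaryDual k V) (w : W) :
    IsLinearlyClosed k {v | L v = w} := by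
  refine ⟨Set.range fun f : Dual k W => (f ∘ₗ L, f w), Set.forall_mem_range.2 hL, fun v => ?_⟩
  simp only [Set.mem_ofPred_eq, Set.forall_mem_range, LinearMap.comp_apply]
  rw [← sub_eq_zero, ← forall_dual_apply_eq_zero_iff k]
  simp only [map_sub, sub_eq_zero]

variable {W : Type*} [AddCommGroup W] [Module k W]

theorem isLinearlyClosed_eq_const {x : X} (α : V x →ₗ[k] W) (w : W) :
    IsLinearlyClosed k {v : ∀ x, V x | α (v x) = w} :=
  isLinearlyClosed_setOf_apply_eq (L := α ∘ₗ LinearMap.proj x)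
    (fun f => comp_proj_mem_finitaryDual (f ∘ₗ α)) w

theorem isLinearlyClosed_eq {x y : X} (α : V x →ₗ[k] W) (β : V y →ₗ[k] W) :
    IsLinearlyClosed k {v : ∀ x, V x | α (v x) = β (v y)} := by
  simp only [← sub_eq_zero (a := α _)]
  refine isLinearlyClosed_setOf_apply_eq
    (L := α ∘ₗ LinearMap.proj x - β ∘ₗ LinearMap.proj y) (fun f => ?_) 0
  rw [LinearMap.comp_sub]
  exact sub_mem (comp_proj_mem_finitaryDual (f ∘ₗ α)) (comp_proj_mem_finitaryDual (f ∘ₗ β))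

variable [∀ x, FiniteDimensional k (V x)]

theorem exists_eq_eval_on_finitaryDual (ξ : Dual k (Dual k (∀ x, V x))) :
    ∃ u, ∀ γ ∈ finitaryDual k V, ξ γ = γ u := by
  let u x := (evalEquiv k (V x)).symm (ξ ∘ₗ (LinearMap.proj x : (∀ x, V x) →ₗ[k] V x).dualMap)
  refine ⟨u, fun γ hγ => ?_⟩
  suffices finitaryDual k V ≤ LinearMap.eqLocus ξ (Dual.eval k _ u) from this hγ
  refine iSup_le fun x => ?_
  rintro _ ⟨f, rfl⟩
  have hf : f (u x) = ξ (f ∘ₗ LinearMap.proj x) := apply_evalEquiv_symm_apply k (V x) f _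
  exact hf.symm

/-- Linear compactness of a product of finite-dimensional spaces. -/
theorem exists_forall_mem_of_antitone {C : Type*} [Preorder C] [IsDirectedOrder C] [Nonempty C]
    {A : C → Set (∀ x, V x)} (hA : ∀ c, IsLinearlyClosed k (A c)) (hanti : Antitone A)
    (hne : ∀ c, (A c).Nonempty) : ∃ v, ∀ c, v ∈ A c := by
  classical
  choose G hfin hG using hA
  obtain ⟨ξ, hξ⟩ := exists_dual_apply_eq (k := k) (fun i : Σ c, G c => i.2.1.1)
    (fun i => i.2.1.2) fun a ha => by
      obtain ⟨c, hc⟩ := Finset.exists_le (a.support.image Sigma.fst)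
      obtain ⟨v, hv⟩ := hne c
      rw [← LinearMap.zero_apply (σ₁₂ := RingHom.id k) v, ← ha]
      simp only [Finsupp.linearCombination_apply, Finsupp.sum, LinearMap.sum_apply,
        LinearMap.smul_apply]
      refine Finset.sum_congr rfl fun i hi => ?_
      have hvi : v ∈ A i.1 := hanti (hc _ (Finset.mem_image_of_mem _ hi)) hv
      rw [(hG i.1 v).1 hvi _ i.2.2]
  obtain ⟨u, hu⟩ := exists_eq_eval_on_finitaryDual ξ
  refine ⟨u, fun c => (hG c u).2 fun γ hγ => ?_⟩
  rw [← hu γ.1 (hfin c γ hγ)]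
  exact hξ ⟨c, γ, hγ⟩

end LinearCompactness

variable {k : Type} [Field k]

section Morphisms

variable {P : Type} [Preorder P]

theorem map_self (N : PersistenceModule k P) {x : P} (h : x ≤ x) (n : N.V x) : N.map h n = n :=
  LinearMap.congr_fun (N.map_refl x) n

theorem map_map (N : PersistenceModule k P) {x y z : P} (hxy : x ≤ y) (hyz : y ≤ z)
    (n : N.V x) : N.map hyz (N.map hxy n) = N.map (hxy.trans hyz) n :=
  (LinearMap.congr_fun (N.map_trans hxy hyz) n).symm

variable {L M N : PersistenceModule k P}

theorem Hom.map_app (f : Hom M N) {x y : P} (h : x ≤ y) (m : M.V x) :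
    N.map h (f.app x m) = f.app y (M.map h m) :=
  LinearMap.congr_fun (f.natural h) m

/-- Composition of morphisms of persistence modules. -/
def Hom.comp (g : Hom M N) (f : Hom L M) : Hom L N where
  app x := g.app x ∘ₗ f.app x
  natural h := LinearMap.ext fun l => by simp only [LinearMap.comp_apply, Hom.map_app]

/-- The inverse of an isomorphism of persistence modules. -/
noncomputable def IsIsoHom.inv {f : Hom M N} (hf : IsIsoHom f) : Hom N M where
  app x := (LinearEquiv.ofBijective (f.app x) (hf x)).symm
  natural {x y} h := LinearMap.ext fun n => by
    obtain ⟨m, rfl⟩ := (hf x).2 n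
    simp only [LinearMap.comp_apply, LinearEquiv.coe_coe, Hom.map_app,
      LinearEquiv.ofBijective_symm_apply_apply]

namespace IsIsoHom

variable {f : Hom M N} (hf : IsIsoHom f)

include hf in
theorem inv_app_app {x : P} (m : M.V x) : hf.inv.app x (f.app x m) = m :=
  LinearEquiv.ofBijective_symm_apply_apply (f.app x) m

theorem app_inv_app {x : P} (n : N.V x) : f.app x (hf.inv.app x n) = n :=
  (LinearEquiv.ofBijective (f.app x) (hf x)).apply_symm_apply n

end IsIsoHom

theorem Isomorphic.symm (h : Isomorphic M N) : Isomorphic N M :=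
  let ⟨_, hf⟩ := h
  ⟨hf.inv, fun x => (LinearEquiv.ofBijective _ (hf x)).symm.bijective⟩

theorem Isomorphic.trans (h : Isomorphic L M) (h' : Isomorphic M N) : Isomorphic L N :=
  let ⟨f, hf⟩ := h
  let ⟨g, hg⟩ := h'
  ⟨g.comp f, fun x => (hg x).comp (hf x)⟩

theorem isomorphic_directSum {ι : Type} {M N : ι → PersistenceModule k P}
    (h : ∀ i, Isomorphic (M i) (N i)) : Isomorphic (directSum M) (directSum N) := by
  choose f hf using h
  refine ⟨⟨fun x => DFinsupp.mapRange.linearMap fun i => (f i).app x, fun {x y} hxy => ?_⟩,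
    fun x => ?_⟩
  · exact LinearMap.ext fun (v : Π₀ i, (M i).V x) =>
      DFinsupp.ext fun i => (f i).map_app hxy (v i)
  · exact (DFinsupp.mapRange.linearEquiv fun i =>
      LinearEquiv.ofBijective ((f i).app x) (hf i x)).bijective

section DirectSum

variable {ι : Type} (M : ι → PersistenceModule k P)

open Classical in
/-- The inclusion of the `i`-th summand of a direct sum. -/
noncomputable def inclusion (i : ι) : Hom (M i) (directSum M) where
  app x := DFinsupp.lsingle (R := k) (M := fun i => (M i).V x) i
  natural {x y} h := LinearMap.ext fun m => by
    change DFinsupp.mapRange (fun i => (M i).map h) (fun i => map_zero _) (DFinsupp.single i m) =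
      DFinsupp.single i ((M i).map h m)
    exact DFinsupp.mapRange_single

/-- The projection of a direct sum onto its `i`-th summand. -/
noncomputable def projection (i : ι) : Hom (directSum M) (M i) where
  app x := (DFinsupp.lapply i : (Π₀ i, (M i).V x) →ₗ[k] (M i).V x)
  natural _ := LinearMap.ext fun _ => rfl

theorem projection_inclusion_self (i : ι) {x : P} (m : (M i).V x) :
    (projection M i).app x ((inclusion M i).app x m) = m := by
  classical
  change (DFinsupp.single i m : Π₀ i, (M i).V x) i = m
  convert DFinsupp.single_eq_same

theorem projection_inclusion_of_ne {i j : ι} (hij : i ≠ j) {x : P} (m : (M i).V x) :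
    (projection M j).app x ((inclusion M i).app x m) = 0 := by
  classical
  change (DFinsupp.single i m : Π₀ i, (M i).V x) j = 0
  convert DFinsupp.single_eq_of_ne hij.symm

end DirectSum

end Morphisms

section Retracts

variable {P : Type} [Preorder P]

/-- `M` is a retract of `N`: the identity of `M` factors through `N`. -/
def IsRetract (M N : PersistenceModule k P) : Prop :=
  ∃ (i : Hom M N) (r : Hom N M), ∀ x m, r.app x (i.app x m) = m

variable {L M N : PersistenceModule k P}

theorem IsRetract.trans (h : IsRetract L M) (h' : IsRetract M N) : IsRetract L N := by
  obtain ⟨i, r, hri⟩ := h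
  obtain ⟨j, s, hsj⟩ := h'
  exact ⟨j.comp i, r.comp s, fun x l => by simp [Hom.comp, hsj, hri]⟩

theorem Isomorphic.isRetract (h : Isomorphic M N) : IsRetract M N :=
  let ⟨f, hf⟩ := h
  ⟨f, hf.inv, fun _ => hf.inv_app_app⟩

theorem isRetract_directSum {ι : Type} (M : ι → PersistenceModule k P) (i : ι) :
    IsRetract (M i) (directSum M) :=
  ⟨inclusion M i, projection M i, fun _ => projection_inclusion_self M i⟩

theorem IsRetract.finiteDimensional (h : IsRetract M N) (x : P) [FiniteDimensional k (N.V x)] :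
    FiniteDimensional k (M.V x) := by
  obtain ⟨i, r, hri⟩ := h
  exact FiniteDimensional.of_injective (i.app x) (Function.LeftInverse.injective (hri x))

/-- The persistence submodule of `N` with fibres `W x`. -/
def subMod (N : PersistenceModule k P) (W : ∀ x, Submodule k (N.V x))
    (hW : ∀ {x y} (h : x ≤ y), ∀ n ∈ W x, N.map h n ∈ W y) : PersistenceModule k P where
  V x := W x
  map h := (N.map h).restrict (hW h)
  map_refl _ := LinearMap.ext fun n => Subtype.ext (map_self N le_rfl n.1)
  map_trans hxy hyz := LinearMap.ext fun n => Subtype.ext (map_map N hxy hyz n.1).symm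

/-- The inclusion of a persistence submodule of `N`. -/
def subModSubtype {W : ∀ x, Submodule k (N.V x)}
    (hW : ∀ {x y} (h : x ≤ y), ∀ n ∈ W x, N.map h n ∈ W y) : Hom (subMod N W hW) N where
  app x := (W x).subtype
  natural _ := LinearMap.ext fun _ => rfl

theorem exists_isomorphic_sum2_of_isRetract (h : IsRetract M N) :
    ∃ K, Isomorphic N (sum2 M K) ∧ (IsZero K → Isomorphic N M) := by
  obtain ⟨i, r, hri⟩ := h
  have hker {x y : P} (h : x ≤ y) n (hn : n ∈ LinearMap.ker (r.app x)) :
      N.map h n ∈ LinearMap.ker (r.app y) := by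
    rw [LinearMap.mem_ker, ← Hom.map_app, LinearMap.mem_ker.1 hn, map_zero]
  have hsub (x n) : n - i.app x (r.app x n) ∈ LinearMap.ker (r.app x) := by simp [hri]
  refine ⟨subMod N _ hker, ⟨⟨fun x => (r.app x).prod
    ((LinearMap.id - i.app x ∘ₗ r.app x).codRestrict _ (hsub x)), fun h => ?_⟩, fun x => ⟨?_, ?_⟩⟩,
    fun hK => ⟨r, fun x => ⟨?_, Function.RightInverse.surjective (hri x)⟩⟩⟩
  · refine LinearMap.ext fun n => Prod.ext (r.map_app h n) (Subtype.ext ?_)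
    change N.map h (n - i.app _ (r.app _ n)) = N.map h n - i.app _ (r.app _ (N.map h n))
    rw [map_sub, Hom.map_app, Hom.map_app]
  · refine (injective_iff_map_eq_zero _).2 fun n hn => ?_
    obtain ⟨hrn, hn⟩ := Prod.mk.inj hn
    have hn : n - i.app x (r.app x n) = 0 := congrArg Subtype.val hn
    rwa [hrn, map_zero, sub_zero] at hn
  · rintro ⟨m, n, hn⟩
    rw [LinearMap.mem_ker] at hn
    refine ⟨i.app x m + n, Prod.ext ?_ (Subtype.ext ?_)⟩
    · change r.app x (i.app x m + n) = m
      rw [map_add, hri, hn, add_zero]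
    · change i.app x m + n - i.app x (r.app x (i.app x m + n)) = n
      rw [map_add, hri, hn, add_zero, add_sub_cancel_left]
  · exact (injective_iff_map_eq_zero _).2 fun n hn => congrArg Subtype.val (hK x ⟨n, hn⟩)

theorem Indecomposable.isomorphic_of_isRetract (hN : Indecomposable N) (h : IsRetract M N)
    (hM : ¬ IsZero M) : Isomorphic N M := by
  obtain ⟨K, hiso, hK⟩ := exists_isomorphic_sum2_of_isRetract h
  exact hK ((hN.2 M K hiso).resolve_left hM)

end Retracts

section IndecomposableSummands

variable {P : Type} [Preorder P] {N : PersistenceModule k P}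

theorem indecomposable_of_idempotent_eq_smul {M : PersistenceModule k P} (hM : ¬ IsZero M)
    (h : ∀ e : Hom M M, (∀ x m, e.app x (e.app x m) = e.app x m) →
      ∃ c : k, ∀ x m, e.app x m = c • m) : Indecomposable M := by
  refine ⟨hM, fun M' M'' ⟨F, hF⟩ => ?_⟩
  let π : Hom (sum2 M' M'') (sum2 M' M'') :=
    ⟨fun x => LinearMap.inl k (M'.V x) (M''.V x) ∘ₗ LinearMap.fst k (M'.V x) (M''.V x),
      fun {x y} h => LinearMap.ext fun m => Prod.ext rfl (map_zero (M''.map h))⟩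
  obtain ⟨c, hc⟩ := h (hF.inv.comp (π.comp F)) fun x m => by
    simp only [Hom.comp, LinearMap.comp_apply, hF.app_inv_app]
    rfl
  have key (x) (a : M'.V x) (b : M''.V x) : a = c • a ∧ 0 = c • b := by
    obtain ⟨m, hm⟩ := (hF x).2 ((a, b) : M'.V x × M''.V x)
    have hab : π.app x (F.app x m) = c • F.app x m := by
      rw [← map_smul, ← hc x m]
      exact (hF.app_inv_app _).symm
    rw [hm] at hab
    exact ⟨congrArg Prod.fst hab, congrArg Prod.snd hab⟩
  rcases eq_or_ne c 0 with rfl | hc0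
  · exact Or.inl fun x a => by simpa using (key x a 0).1
  · exact Or.inr fun x b => by simpa [hc0] using (key x 0 b).2.symm

section InternalSum

variable {ι : Type} {W : ι → ∀ x, Submodule k (N.V x)}
  (hW : ∀ i {x y} (h : x ≤ y), ∀ n ∈ W i x, N.map h n ∈ W i y)

open Classical in
/-- The sum map from the direct sum of a family of persistence submodules of `N` to `N`. -/
noncomputable def sumHom : Hom (directSum fun i => subMod N (W i) (hW i)) N where
  app x := (DFinsupp.lsum ℕ fun i => (W i x).subtype : (Π₀ i, W i x) →ₗ[k] N.V x)
  natural {x y} h := by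
    refine DFinsupp.lhom_ext (N := N.V y) (M := fun i => W i x) fun i w => ?_
    change N.map h (DFinsupp.lsum ℕ (fun i => (W i x).subtype) (DFinsupp.single i w)) =
      DFinsupp.lsum ℕ (fun i => (W i y).subtype)
        (DFinsupp.mapRange (fun i => (N.map h).restrict (hW i h)) (fun i => map_zero _)
          (DFinsupp.single i w))
    rw [DFinsupp.mapRange_single, DFinsupp.lsum_single, DFinsupp.lsum_single]
    rfl

theorem sumHom_inclusion (i : ι) {x : P} (w : W i x) :
    (sumHom hW).app x ((inclusion (fun i => subMod N (W i) (hW i)) i).app x w) = w := by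
  classical
  change DFinsupp.lsum ℕ (fun i => (W i x).subtype) (DFinsupp.single i w) = w
  rw [DFinsupp.lsum_single, Submodule.subtype_apply]

theorem isIsoHom_sumHom (hind : ∀ x, iSupIndep fun i => W i x) (htop : ∀ x, ⨆ i, W i x = ⊤) :
    IsIsoHom (sumHom hW) := by
  classical
  refine fun x => ⟨(hind x).dfinsupp_lsum_injective, LinearMap.range_eq_top.1 ?_⟩
  exact (Submodule.iSup_eq_range_dfinsupp_lsum _).symm.trans (htop x)

theorem exists_hom_subMod (hind : ∀ x, iSupIndep fun i => W i x) (htop : ∀ x, ⨆ i, W i x = ⊤)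
    (i : ι) : ∃ r : Hom N (subMod N (W i) (hW i)),
      (∀ x (w : W i x), r.app x w = w) ∧ ∀ j ≠ i, ∀ x, ∀ w ∈ W j x, r.app x w = 0 := by
  have hiso := isIsoHom_sumHom hW hind htop
  have hinv (j x) (w : W j x) : hiso.inv.app x w = (inclusion _ j).app x w := by
    rw [← sumHom_inclusion hW j w, hiso.inv_app_app]
  refine ⟨(projection _ i).comp hiso.inv, fun x w => ?_, fun j hj x w hw => ?_⟩
  · exact (congrArg _ (hinv i x w)).trans (projection_inclusion_self _ i _)
  · exact (congrArg _ (hinv j x ⟨w, hw⟩)).trans (projection_inclusion_of_ne _ hj _)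

end InternalSum

section JointEigenspaces

/-- An idempotent endomorphism of `N`, given as a family of linear endomorphisms so that
commutation takes place in the ring `∀ x, End k (N.V x)`. -/
def IsNaturalIdempotent (N : PersistenceModule k P) (e : ∀ x, End k (N.V x)) : Prop :=
  IsIdempotentElem e ∧ ∀ {x y} (h : x ≤ y), N.map h ∘ₗ e x = e y ∘ₗ N.map h

/-- The joint eigenspace at `x`, with eigenvalues `χ`, of a set `S` of natural idempotents. -/
def jointEigenspace (S : Set (∀ x, End k (N.V x))) (χ : S → k) (x : P) :
    Submodule k (N.V x) :=
  ⨅ e : S, (e.1 x).eigenspace (χ e)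

variable {S : Set (∀ x, End k (N.V x))} {χ : S → k}

theorem mem_jointEigenspace {x : P} {n : N.V x} :
    n ∈ jointEigenspace S χ x ↔ ∀ e : S, e.1 x n = χ e • n := by
  simp [jointEigenspace]

variable (hS : ∀ e ∈ S, IsNaturalIdempotent N e)

include hS in
theorem map_mem_jointEigenspace {x y : P} (h : x ≤ y) (n : N.V x)
    (hn : n ∈ jointEigenspace S χ x) : N.map h n ∈ jointEigenspace S χ y := by
  rw [mem_jointEigenspace] at hn ⊢
  intro e
  have he : N.map h (e.1 x n) = e.1 y (N.map h n) := LinearMap.congr_fun ((hS e e.2).2 h) n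
  rw [← he, hn, map_smul]

variable (χ) in
/-- The persistence submodule of joint eigenspaces. -/
def jointEigenmodule : PersistenceModule k P :=
  subMod N (jointEigenspace S χ) fun h => map_mem_jointEigenspace hS h

variable (χ) in
/-- The inclusion of the joint eigenmodule. -/
abbrev jointEigenmoduleSubtype : Hom (jointEigenmodule χ hS) N :=
  subModSubtype fun h => map_mem_jointEigenspace hS h

variable (hcomm : ∀ e ∈ S, ∀ f ∈ S, Commute e f)

include hS hcomm

theorem iSupIndep_jointEigenspace (x : P) : iSupIndep fun χ : S → k => jointEigenspace S χ x :=
  iSupIndep_iInf_eigenspace (fun e : S => congrFun (hS e e.2).1 x)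
    fun e f => congrFun (hcomm e e.2 f f.2) x

theorem iSup_jointEigenspace (x : P) [FiniteDimensional k (N.V x)] :
    ⨆ χ : S → k, jointEigenspace S χ x = ⊤ :=
  iSup_iInf_eigenspace_eq_top (fun e : S => congrFun (hS e e.2).1 x)
    fun e f => congrFun (hcomm e e.2 f f.2) x

variable [∀ x, FiniteDimensional k (N.V x)]

/-- Conjugate `e` by the inclusion of the joint eigenmodule and the projection onto it. -/
theorem exists_naturalIdempotent_extending (e : Hom (jointEigenmodule χ hS) (jointEigenmodule χ hS))
    (he : ∀ x m, e.app x (e.app x m) = e.app x m) :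
    ∃ E, IsNaturalIdempotent N E ∧ (∀ f ∈ S, Commute E f) ∧
      ∀ x w, E x ((jointEigenmoduleSubtype χ hS).app x w) =
        (jointEigenmoduleSubtype χ hS).app x (e.app x w) := by
  obtain ⟨r, hr, hr0⟩ := exists_hom_subMod (W := jointEigenspace S)
    (fun _ => map_mem_jointEigenspace hS) (iSupIndep_jointEigenspace hS hcomm)
    (fun x => iSup_jointEigenspace hS hcomm x) χ
  let i := jointEigenmoduleSubtype χ hS
  let E := i.comp (e.comp r)
  have hE (x w) : E.app x (i.app x w) = i.app x (e.app x w) :=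
    congrArg (fun v => i.app x (e.app x v)) (hr x w)
  refine ⟨E.app, ⟨funext fun x => LinearMap.ext fun n => ?_, E.natural⟩, fun f hf =>
    funext fun x => ?_, hE⟩
  · exact (hE x (e.app x (r.app x n))).trans (congrArg (i.app x) (he x (r.app x n)))
  · refine linearMap_ext_of_iSup_eq_top (iSup_jointEigenspace hS hcomm x) fun ψ w hw => ?_
    change E.app x (f x w) = f x (E.app x w)
    rw [mem_jointEigenspace.1 hw ⟨f, hf⟩, map_smul]
    rcases eq_or_ne ψ χ with rfl | hne
    · exact (mem_jointEigenspace.1 (e.app x (r.app x w)).2 ⟨f, hf⟩).symm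
    · have hEw : E.app x w = 0 := by
        have hrw : r.app x w = (0 : (jointEigenmodule χ hS).V x) := hr0 ψ hne x w hw
        exact (congrArg (fun v => i.app x (e.app x v)) hrw).trans (by simp only [map_zero])
      rw [hEw, map_zero, smul_zero]

theorem indecomposable_jointEigenmodule (hχ : ¬ IsZero (jointEigenmodule χ hS))
    (hmax : ∀ e, IsNaturalIdempotent N e → (∀ f ∈ S, Commute e f) → e ∈ S) :
    Indecomposable (jointEigenmodule χ hS) := by
  refine indecomposable_of_idempotent_eq_smul hχ fun e he => ?_
  obtain ⟨E, hE, hES, hEe⟩ := exists_naturalIdempotent_extending hS hcomm e he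
  refine ⟨χ ⟨E, hmax E hE hES⟩, fun x w => Subtype.ext ?_⟩
  exact (hEe x w).symm.trans (mem_jointEigenspace.1 w.2 ⟨E, hmax E hE hES⟩)

end JointEigenspaces

theorem exists_isomorphic_directSum_indecomposable (N : PersistenceModule k P)
    [∀ x, FiniteDimensional k (N.V x)] :
    ∃ (ι : Type) (M : ι → PersistenceModule k P),
      (∀ i, Indecomposable (M i)) ∧ Isomorphic N (directSum M) := by
  obtain ⟨S, hS, hcomm, hmax⟩ := exists_maximal_commuting {e | IsNaturalIdempotent N e}
  let ι := {χ : S → k // ¬ IsZero (jointEigenmodule χ hS)}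
  refine ⟨ι, fun χ => jointEigenmodule χ.1 hS,
    fun χ => indecomposable_jointEigenmodule hS hcomm χ.2 hmax, Isomorphic.symm ?_⟩
  refine ⟨_, isIsoHom_sumHom (W := fun χ : ι => jointEigenspace S χ.1)
    (fun _ => map_mem_jointEigenspace hS)
    (fun x => (iSupIndep_jointEigenspace hS hcomm x).comp Subtype.val_injective) fun x => ?_⟩
  refine top_unique ((iSup_jointEigenspace hS hcomm x).symm.trans_le (iSup_le fun χ => ?_))
  by_cases hχ : IsZero (jointEigenmodule χ hS)
  · intro n hn
    have hn0 : n = 0 := congrArg Subtype.val (hχ x ⟨n, hn⟩)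
    exact hn0 ▸ zero_mem _
  · exact le_iSup (fun χ : ι => jointEigenspace S χ.1 x) ⟨χ, hχ⟩

end IndecomposableSummands

section IntervalSummands

variable {P : Type} [Preorder P] {N : PersistenceModule k P}

theorem isRetract_intervalModule {B : Set P} (hB : IsConvex B) (φ : ∀ q, N.V q)
    (f : ∀ q, Dual k (N.V q)) (hφ0 : ∀ q ∉ B, φ q = 0) (hf0 : ∀ q ∉ B, f q = 0)
    (hφ : ∀ {q r} (h : q ≤ r), q ∈ B → N.map h (φ q) = φ r)
    (hf : ∀ {q r} (h : q ≤ r), r ∈ B → ∀ n, f r (N.map h n) = f q n)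
    (hone : ∀ q ∈ B, f q (φ q) = 1) : IsRetract (intervalModule k B hB) N := by
  have hmem (q n) : f q n ∈ kMod k B q := by
    by_cases hq : q ∈ B <;> simp [kMod, hq, hf0]
  refine ⟨⟨fun q => LinearMap.toSpanSingleton k (N.V q) (φ q) ∘ₗ (kMod k B q).subtype, ?_⟩,
    ⟨fun q => (f q).codRestrict (kMod k B q) (hmem q), ?_⟩, ?_⟩
  · refine fun {q r} h => LinearMap.ext fun (a : kMod k B q) => ?_
    change N.map h (a.1 • φ q) = (intervalMap k B h a).1 • φ r
    by_cases hq : q ∈ B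
    · by_cases hr : r ∈ B <;> simp [intervalMap, hr, hφ h hq, hφ0]
    · by_cases hr : r ∈ B <;> simp [intervalMap, hr, kMod_coe_eq_zero k hq a]
  · refine fun {q r} h => LinearMap.ext fun n => Subtype.ext ?_
    change (intervalMap k B h ⟨f q n, hmem q n⟩).1 = f r (N.map h n)
    by_cases hr : r ∈ B <;> simp [intervalMap, hr, hf h, hf0]
  · refine fun q (a : kMod k B q) => Subtype.ext ?_
    change f q (a.1 • φ q) = a.1
    by_cases hq : q ∈ B
    · simp [hone q hq]
    · simp [kMod_coe_eq_zero k hq a]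

theorem exists_dual_on_finset {D : Set P} (hdir : DirectedOn (· ≤ ·) D)
    {φ : ∀ q, N.V q} {L : ∀ q, Submodule k (N.V q)} {r₀ : P} (hr₀ : r₀ ∈ D)
    (hφ : ∀ {r} (h : r₀ ≤ r), r ∈ D → N.map h (φ r₀) = φ r)
    (hL : ∀ {q r} (h : q ≤ r), r ∈ D → ∀ n ∈ L q, N.map h n ∈ L r)
    (hφL : ∀ {r}, r₀ ≤ r → r ∈ D → φ r ∉ L r) (F : Finset P) :
    ∃ f : ∀ q, Dual k (N.V q), f r₀ (φ r₀) = 1 ∧ (∀ q ∈ F, q ∈ D → ∀ n ∈ L q, f q n = 0) ∧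
      ∀ q ∈ F, ∀ r ∈ F, ∀ h : q ≤ r, r ∈ D → ∀ n, f r (N.map h n) = f q n := by
  classical
  have := hdir.isDirectedOrder
  have : Nonempty D := ⟨r₀, hr₀⟩
  obtain ⟨⟨z, hzD⟩, hz⟩ := Finset.exists_le ((insert r₀ F).subtype (· ∈ D))
  have hr₀z : r₀ ≤ z := hz ⟨r₀, hr₀⟩ (by simp)
  obtain ⟨g, hg, hgL⟩ := Submodule.exists_le_ker_of_notMem (hφL hr₀z hzD)
  have hqz {q} (hqF : q ∈ F) (hqD : q ∈ D) : q ≤ z := hz ⟨q, hqD⟩ (by simp [hqF])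
  refine ⟨fun q => if h : q ≤ z then (g (φ z))⁻¹ • g ∘ₗ N.map h else 0, ?_, ?_, ?_⟩
  · simp [hr₀z, hφ hr₀z hzD, hg]
  · intro q hqF hqD n hn
    have : g (N.map (hqz hqF hqD) n) = 0 := hgL (hL _ hzD n hn)
    simp [hqz hqF hqD, this]
  · intro q _ r hrF h hrD n
    have hrz := hqz hrF hrD
    simp [hrz, h.trans hrz, map_map]

/-- The subspaces `L q` record what enters the prospective summand from below. -/
theorem exists_dual_of_notMem [∀ q, FiniteDimensional k (N.V q)] {D : Set P}
    (hdir : DirectedOn (· ≤ ·) D) {φ : ∀ q, N.V q} {L : ∀ q, Submodule k (N.V q)} {r₀ : P}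
    (hr₀ : r₀ ∈ D) (hφ : ∀ {r} (h : r₀ ≤ r), r ∈ D → N.map h (φ r₀) = φ r)
    (hL : ∀ {q r} (h : q ≤ r), r ∈ D → ∀ n ∈ L q, N.map h n ∈ L r)
    (hφL : ∀ {r}, r₀ ≤ r → r ∈ D → φ r ∉ L r) :
    ∃ f : ∀ q, Dual k (N.V q), f r₀ (φ r₀) = 1 ∧ (∀ q ∈ D, ∀ n ∈ L q, f q n = 0) ∧
      ∀ {q r} (h : q ≤ r), r ∈ D → ∀ n, f r (N.map h n) = f q n := by
  classical
  let A (F : Finset P) : Set (∀ q, Dual k (N.V q)) := {f | f r₀ (φ r₀) = 1 ∧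
    (∀ q ∈ F, q ∈ D → ∀ n ∈ L q, f q n = 0) ∧
    ∀ q ∈ F, ∀ r ∈ F, ∀ h : q ≤ r, r ∈ D → ∀ n, f r (N.map h n) = f q n}
  have hA (F) : IsLinearlyClosed k (A F) := by
    refine (isLinearlyClosed_eq_const (V := fun q => Dual k (N.V q)) (x := r₀)
      (Dual.eval k _ (φ r₀)) (1 : k)).and (.and ?_ ?_)
    · exact .forall fun q => .forall fun _ => .forall fun _ => .forall fun n => .forall fun _ =>
        isLinearlyClosed_eq_const (V := fun q => Dual k (N.V q)) (Dual.eval k _ n) (0 : k)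
    · exact .forall fun q => .forall fun _ => .forall fun r => .forall fun _ => .forall fun h =>
        .forall fun _ => .forall fun n =>
          isLinearlyClosed_eq (V := fun q => Dual k (N.V q))
            (Dual.eval k _ (N.map h n)) (Dual.eval k _ n)
  obtain ⟨f, hf⟩ := exists_forall_mem_of_antitone hA
    (fun F G hFG f hf => ⟨hf.1, fun q hq => hf.2.1 q (Finset.mem_of_subset hFG hq),
      fun q hq r hr => hf.2.2 q (Finset.mem_of_subset hFG hq) r (Finset.mem_of_subset hFG hr)⟩)
    (exists_dual_on_finset hdir hr₀ hφ hL hφL)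
  exact ⟨f, (hf ∅).1, fun q => (hf {q}).2.1 q (by simp),
    fun {q r} => (hf {q, r}).2.2 q (by simp) r (by simp)⟩

theorem isRetract_intervalModule_of_notMem [∀ q, FiniteDimensional k (N.V q)] {U D B : Set P}
    (hU : IsFilter U) (hD : IsIdeal D) (hdir : DirectedOn (· ≤ ·) D) (hBUD : B = U ∩ D)
    (hB : IsConvex B) (hne : B.Nonempty) (φ : ∀ q, N.V q) (L : ∀ q, Submodule k (N.V q))
    (hφ : ∀ {q r} (h : q ≤ r), q ∈ B → r ∈ D → N.map h (φ q) = φ r)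
    (hφ0 : ∀ {q r} (h : q ≤ r), q ∈ B → r ∉ D → N.map h (φ q) = 0)
    (hL : ∀ {q r} (h : q ≤ r), r ∈ D → ∀ n ∈ L q, N.map h n ∈ L r)
    (hLtop : ∀ q ∈ D, q ∉ U → L q = ⊤) (hφL : ∀ q ∈ B, φ q ∉ L q) :
    IsRetract (intervalModule k B hB) N := by
  classical
  subst hBUD
  obtain ⟨r₀, hr₀⟩ := hne
  obtain ⟨f, hfr₀, hfL, hfmap⟩ := exists_dual_of_notMem hdir hr₀.2 (fun h => hφ h hr₀) hL
    fun {r} h hr => hφL r ⟨hU _ _ h hr₀.1, hr⟩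
  have hone : ∀ q ∈ U ∩ D, f q (φ q) = 1 := by
    intro q hq
    obtain ⟨z, hzD, hqz, hr₀z⟩ := hdir q hq.2 r₀ hr₀.2
    rw [← hfmap hqz hzD, hφ hqz hq hzD, ← hφ hr₀z hr₀ hzD, hfmap hr₀z hzD, hfr₀]
  refine isRetract_intervalModule hB (fun q => if q ∈ U ∩ D then φ q else 0)
    (fun q => if q ∈ U ∩ D then f q else 0) (fun q hq => if_neg hq) (fun q hq => if_neg hq)
    (fun {q r} h hq => ?_) (fun {q r} h hr n => ?_) fun q hq => ?_
  · have hrU := hU _ _ h hq.1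
    by_cases hr : r ∈ D
    · rw [if_pos hq, if_pos ⟨hrU, hr⟩, hφ h hq hr]
    · rw [if_pos hq, if_neg fun hr' => hr hr'.2, hφ0 h hq hr]
  · have hqD := hD _ _ h hr.2
    rw [if_pos hr, hfmap h hr.2]
    by_cases hq : q ∈ U
    · rw [if_pos ⟨hq, hqD⟩]
    · rw [if_neg fun hq' => hq hq'.1, hfL q hqD n (hLtop q hqD hq ▸ Submodule.mem_top)]
      rfl
  · rw [if_pos hq, if_pos hq, hone q hq]

end IntervalSummands

section CompatibleFamilies

variable {P : Type}

/-- The vectors `v q`, for `q ∈ W`, are compatible with the structure maps of `N`: they form a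
section of `N` over `W`. -/
def IsCompatibleOn [Preorder P] (N : PersistenceModule k P) (W : Set P) (v : ∀ q, N.V q) : Prop :=
  ∀ q ∈ W, ∀ r ∈ W, ∀ h : q ≤ r, N.map h (v q) = v r

theorem IsCompatibleOn.mono [Preorder P] {N : PersistenceModule k P} {W W' : Set P}
    {v : ∀ q, N.V q} (hv : IsCompatibleOn N W v) (hW : W' ⊆ W) : IsCompatibleOn N W' v :=
  fun q hq r hr => hv q (hW hq) r (hW hr)

theorem exists_isCompatibleOn_of_forall_finset [Preorder P] {N : PersistenceModule k P}
    [∀ q, FiniteDimensional k (N.V q)] {p : P} {m : N.V p} {W Z : Set P}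
    (h : ∀ F : Finset P, ∃ v : ∀ q, N.V q, v p = m ∧ (∀ q ∈ Z, v q = 0) ∧
      IsCompatibleOn N (W ∩ F) v) :
    ∃ v : ∀ q, N.V q, v p = m ∧ (∀ q ∈ Z, v q = 0) ∧ IsCompatibleOn N W v := by
  classical
  let A (F : Finset P) : Set (∀ q, N.V q) :=
    {v | v p = m ∧ (∀ q ∈ Z, v q = 0) ∧ IsCompatibleOn N (W ∩ F) v}
  have hA (F) : IsLinearlyClosed k (A F) := by
    refine (isLinearlyClosed_eq_const LinearMap.id m).and (.and ?_ ?_)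
    · exact .forall fun q => .forall fun _ => isLinearlyClosed_eq_const LinearMap.id 0
    · exact .forall fun q => .forall fun _ => .forall fun r => .forall fun _ => .forall fun h =>
        isLinearlyClosed_eq (N.map h) LinearMap.id
  obtain ⟨v, hv⟩ := exists_forall_mem_of_antitone hA (fun F G hFG v hv =>
    ⟨hv.1, hv.2.1, hv.2.2.mono (Set.inter_subset_inter_right _ (Finset.coe_subset.2 hFG))⟩) h
  refine ⟨v, (hv ∅).1, (hv ∅).2.1, fun q hq r hr => ?_⟩
  exact (hv {q, r}).2.2 q ⟨hq, by simp⟩ r ⟨hr, by simp⟩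

theorem IsCompatibleOn.update [Preorder P] [DecidableEq P] {N : PersistenceModule k P} {W : Set P}
    {v : ∀ q, N.V q} (hv : IsCompatibleOn N W v) {q : P} {n : N.V q} (hq : ∀ r ∈ W, ¬ r ≤ q)
    (hn : ∀ r ∈ W, ∀ h : q ≤ r, N.map h n = v r) :
    IsCompatibleOn N (insert q W) (Function.update v q n) := by
  have ne_of_mem {r} (hr : r ∈ W) : r ≠ q := fun h => hq r hr h.le
  rintro a (rfl | ha) b (rfl | hb) hab
  · rw [map_self]
  · rw [Function.update_self, Function.update_of_ne (ne_of_mem hb), hn b hb]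
  · exact absurd hab (hq a ha)
  · rw [Function.update_of_ne (ne_of_mem ha), Function.update_of_ne (ne_of_mem hb), hv a ha b hb]

theorem exists_isCompatibleOn_of_extends [PartialOrder P] {N : PersistenceModule k P}
    {G K : Set P} (hG : G.Finite) (hK : IsUpperSet K) {v₀ : ∀ q, N.V q}
    (hv₀ : IsCompatibleOn N K v₀)
    (hext : ∀ q ∈ G, q ∉ K → ∀ v, IsCompatibleOn N (G ∩ Set.Ioi q) v →
      ∃ n : N.V q, ∀ r ∈ G, ∀ h : q < r, N.map h.le n = v r) :
    ∃ v, (∀ q ∈ K, v q = v₀ q) ∧ IsCompatibleOn N G v := by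
  classical
  suffices H : ∀ F : Finset P, ↑F ⊆ G → (∀ q ∈ F, ∀ r ∈ G, q ≤ r → r ∈ F) →
      ∃ v, (∀ q ∈ K, v q = v₀ q) ∧ IsCompatibleOn N F v by
    simpa using H hG.toFinset (by simp) (by simp +contextual)
  intro F
  induction F using Finset.strongInduction with
  | H F ih =>
    intro hFG hF
    obtain rfl | hne := F.eq_empty_or_nonempty
    · exact ⟨v₀, fun _ _ => rfl, by simp [IsCompatibleOn]⟩
    obtain ⟨q, hqF, hqmin⟩ := F.exists_minimal hne
    have not_le {r} (hr : r ∈ F.erase q) : ¬ r ≤ q := fun h =>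
      (Finset.mem_erase.1 hr).1 (h.antisymm (hqmin (Finset.mem_of_mem_erase hr) h))
    obtain ⟨v, hvK, hv⟩ := ih (F.erase q) (Finset.erase_ssubset hqF)
      ((Finset.coe_subset.2 (F.erase_subset q)).trans hFG) fun r hr s hs hrs =>
        Finset.mem_erase.2
          ⟨fun h => not_le hr (h ▸ hrs), hF r (Finset.mem_of_mem_erase hr) s hs hrs⟩
    obtain ⟨n, hnK, hn⟩ : ∃ n : N.V q, (q ∈ K → n = v₀ q) ∧
        ∀ r ∈ F.erase q, ∀ h : q ≤ r, N.map h n = v r := by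
      by_cases hqK : q ∈ K
      · exact ⟨v₀ q, fun _ => rfl, fun r _ h => by rw [hvK r (hK h hqK), hv₀ q hqK r (hK h hqK)]⟩
      · obtain ⟨n, hn⟩ := hext q (hFG hqF) hqK v <| hv.mono fun r hr =>
          Finset.mem_coe.2 (Finset.mem_erase.2 ⟨hr.2.ne', hF q hqF r hr.1 hr.2.le⟩)
        exact ⟨n, fun h => absurd h hqK, fun r hr h =>
          hn r (hFG (Finset.mem_of_mem_erase hr)) (h.lt_of_ne (Finset.ne_of_mem_erase hr).symm)⟩
    refine ⟨Function.update v q n, fun a ha => ?_, ?_⟩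
    · obtain rfl | haq := eq_or_ne a q
      · rw [Function.update_self, hnK ha]
      · rw [Function.update_of_ne haq, hvK a ha]
    · rw [← Finset.insert_erase hqF, Finset.coe_insert]
      exact hv.update (fun _ hr => not_le hr) hn

end CompatibleFamilies

section MiddleExactness

variable {S T : Type} {Q : Set (S × T)}

/-- The part of `Q` in the grid `A × B`. -/
def grid (Q : Set (S × T)) (A : Finset S) (B : Finset T) : Set Q := {q | q.1.1 ∈ A ∧ q.1.2 ∈ B}

theorem finite_grid (A : Finset S) (B : Finset T) : (grid Q A B).Finite :=
  ((A ×ˢ B).finite_toSet.preimage Subtype.val_injective.injOn).subset fun _ hq =>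
    Finset.mem_coe.2 (Finset.mem_product.2 hq)

variable [LinearOrder S] [LinearOrder T]

/-- Middle exactness over a subposet `Q` of a product of two totally ordered sets, as in
`MiddleExactSub`. -/
def MiddleExactOn (Q : Set (S × T)) (N : PersistenceModule k Q) : Prop :=
  ∀ (x x' : S) (y y' : T) (hx : x ≤ x') (hy : y ≤ y')
    (ha : (x, y) ∈ Q) (hb : (x, y') ∈ Q) (hc : (x', y) ∈ Q) (hd : (x', y') ∈ Q),
    ∀ (mb : N.V ⟨(x, y'), hb⟩) (mc : N.V ⟨(x', y), hc⟩),
      N.map (show (⟨(x, y'), hb⟩ : Q) ≤ ⟨(x', y'), hd⟩ from ⟨hx, le_rfl⟩) mb =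
        N.map (show (⟨(x', y), hc⟩ : Q) ≤ ⟨(x', y'), hd⟩ from ⟨le_rfl, hy⟩) mc →
      ∃ ma : N.V ⟨(x, y), ha⟩,
        N.map (show (⟨(x, y), ha⟩ : Q) ≤ ⟨(x, y'), hb⟩ from ⟨le_rfl, hy⟩) ma = mb ∧
        N.map (show (⟨(x, y), ha⟩ : Q) ≤ ⟨(x', y), hc⟩ from ⟨hx, le_rfl⟩) ma = mc

variable {M N : PersistenceModule k Q}

theorem MiddleExactOn.exists_map_eq (hN : MiddleExactOn Q N) {a b c d : Q} (hab : a ≤ b)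
    (hac : a ≤ c) (hbd : b ≤ d) (hcd : c ≤ d) (hb : b.1.1 ≤ a.1.1) (hc : c.1.2 ≤ a.1.2)
    (hdc : d.1.1 ≤ c.1.1) (hdb : d.1.2 ≤ b.1.2) {mb : N.V b} {mc : N.V c}
    (h : N.map hbd mb = N.map hcd mc) : ∃ ma, N.map hab ma = mb ∧ N.map hac ma = mc := by
  obtain ⟨⟨x, y⟩, ha⟩ := a
  obtain ⟨⟨x₁, y'⟩, hb'⟩ := b
  obtain ⟨⟨x', y₁⟩, hc'⟩ := c
  obtain ⟨⟨x₂, y₂⟩, hd⟩ := d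
  obtain rfl : x₁ = x := le_antisymm hb hab.1
  obtain rfl : y₁ = y := le_antisymm hc hac.2
  obtain rfl : x₂ = x' := le_antisymm hdc hcd.1
  obtain rfl : y₂ = y' := le_antisymm hdb hbd.2
  exact hN x₁ x₂ y₁ y₂ hac.1 hab.2 ha hb' hc' hd mb mc h

theorem MiddleExactOn.of_isRetract (hN : MiddleExactOn Q N) (h : IsRetract M N) :
    MiddleExactOn Q M := by
  obtain ⟨i, r, hri⟩ := h
  intro x x' y y' hx hy ha hb hc hd mb mc h
  obtain ⟨n, hnb, hnc⟩ := hN x x' y y' hx hy ha hb hc hd (i.app _ mb) (i.app _ mc)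
    (by rw [Hom.map_app, Hom.map_app, h])
  exact ⟨r.app _ n, by rw [Hom.map_app, hnb, hri], by rw [Hom.map_app, hnc, hri]⟩

variable (hQ : IsUpperSet Q)

/-- The translate of `q` to the right, to first coordinate `s` if `q.1.1 ≤ s`. -/
def right (q : Q) (s : S) : Q := ⟨(q.1.1 ⊔ s, q.1.2), hQ (a := q.1) ⟨le_sup_left, le_rfl⟩ q.2⟩

/-- The upward translate of `q`, to second coordinate `t` if `q.1.2 ≤ t`. -/
def up (q : Q) (t : T) : Q := ⟨(q.1.1, q.1.2 ⊔ t), hQ (a := q.1) ⟨le_rfl, le_sup_left⟩ q.2⟩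

theorem le_right (q : Q) (s : S) : q ≤ right hQ q s := ⟨le_sup_left, le_rfl⟩

theorem le_up (q : Q) (t : T) : q ≤ up hQ q t := ⟨le_rfl, le_sup_left⟩

include hQ

/-- The two neighbours of `q` in the grid determine an extension by middle exactness. -/
theorem MiddleExactOn.exists_extends_grid (hN : MiddleExactOn Q N) {A : Finset S} {B : Finset T}
    {q : Q} (hq : q ∈ grid Q A B) (hA : ∃ s ∈ A, q.1.1 < s) (hB : ∃ t ∈ B, q.1.2 < t)
    {v : ∀ q, N.V q} (hv : IsCompatibleOn N (grid Q A B ∩ Set.Ioi q) v) :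
    ∃ n : N.V q, ∀ r ∈ grid Q A B, ∀ h : q < r, N.map h.le n = v r := by
  have exists_next {α : Type} [LinearOrder α] {C : Finset α} {a : α} (h : ∃ c ∈ C, a < c) :
      ∃ c ∈ C, a < c ∧ ∀ c' ∈ C, a < c' → c ≤ c' := by
    obtain ⟨c, hc, hmin⟩ := Finset.exists_min_image _ id (Finset.filter_nonempty_iff.2 h)
    simp only [Finset.mem_filter, id, and_imp] at hc hmin
    exact ⟨c, hc.1, hc.2, hmin⟩
  obtain ⟨s, hsA, hqs, hs⟩ := exists_next hA
  obtain ⟨t, htB, hqt, ht⟩ := exists_next hB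
  let b : Q := ⟨(q.1.1, t), hQ (a := q.1) ⟨le_rfl, hqt.le⟩ q.2⟩
  let c : Q := ⟨(s, q.1.2), hQ (a := q.1) ⟨hqs.le, le_rfl⟩ q.2⟩
  let d : Q := ⟨(s, t), hQ (a := q.1) ⟨hqs.le, hqt.le⟩ q.2⟩
  have hqb : q < b := Prod.mk_lt_mk.2 (.inr ⟨le_rfl, hqt⟩)
  have hqc : q < c := Prod.mk_lt_mk.2 (.inl ⟨hqs, le_rfl⟩)
  have hbd : b ≤ d := ⟨hqs.le, le_rfl⟩
  have hcd : c ≤ d := ⟨le_rfl, hqt.le⟩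
  have hb : b ∈ grid Q A B ∩ Set.Ioi q := ⟨⟨hq.1, htB⟩, hqb⟩
  have hc : c ∈ grid Q A B ∩ Set.Ioi q := ⟨⟨hsA, hq.2⟩, hqc⟩
  have hd : d ∈ grid Q A B ∩ Set.Ioi q := ⟨⟨hsA, htB⟩, hqb.trans_le hbd⟩
  obtain ⟨n, hnb, hnc⟩ := hN.exists_map_eq hqb.le hqc.le hbd hcd le_rfl le_rfl le_rfl le_rfl
    ((hv b hb d hd hbd).trans (hv c hc d hd hcd).symm)
  refine ⟨n, fun r hr hqr => ?_⟩
  obtain hlt | heq := hqr.le.1.lt_or_eq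
  · have hcr : c ≤ r := ⟨hs _ hr.1 hlt, hqr.le.2⟩
    rw [← map_map N hqc.le hcr, hnc, hv c hc r ⟨hr, hqr⟩]
  · have hlt : q.1.2 < r.1.2 := hqr.le.2.lt_of_ne fun h => hqr.ne (Subtype.ext (Prod.ext heq h))
    have hbr : b ≤ r := ⟨hqr.le.1, ht _ hr.2 hlt⟩
    rw [← map_map N hqb.le hbr, hnb, hv b hb r ⟨hr, hqr⟩]

theorem MiddleExactOn.exists_isCompatibleOn_grid (hN : MiddleExactOn Q N) {A : Finset S}
    {B : Finset T} {p : Q} {m : N.V p} {Z : Set Q} (hZ : IsUpperSet Z)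
    (hmZ : ∀ q ∈ Z, ∀ h : p ≤ q, N.map h m = 0)
    (hA : ∀ q ∈ grid Q A B, q ∉ Z → ¬ p ≤ q → ∃ s ∈ A, q.1.1 < s)
    (hB : ∀ q ∈ grid Q A B, q ∉ Z → ¬ p ≤ q → ∃ t ∈ B, q.1.2 < t) :
    ∃ v : ∀ q, N.V q, (∀ q, ∀ h : p ≤ q, v q = N.map h m) ∧ (∀ q ∈ Z, v q = 0) ∧
      IsCompatibleOn N (grid Q A B) v := by
  classical
  let v₀ (q : Q) : N.V q := if h : p ≤ q then N.map h m else 0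
  have hv₀p {q} (h : p ≤ q) : v₀ q = N.map h m := dif_pos h
  have hv₀Z {q} (hq : q ∈ Z) : v₀ q = 0 := by
    by_cases h : p ≤ q
    · exact (hv₀p h).trans (hmZ q hq h)
    · exact dif_neg h
  have hv₀ : IsCompatibleOn N {q | p ≤ q ∨ q ∈ Z} v₀ := by
    rintro q (hq | hq) r - hqr
    · rw [hv₀p hq, hv₀p (hq.trans hqr), map_map]
    · rw [hv₀Z hq, hv₀Z (hZ hqr hq), map_zero]
  have hK : IsUpperSet {q | p ≤ q ∨ q ∈ Z} := fun q r hqr =>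
    Or.imp (fun hq => hq.trans hqr) (fun hq => hZ hqr hq)
  obtain ⟨v, hvK, hv⟩ := exists_isCompatibleOn_of_extends (finite_grid A B) hK hv₀
    fun q hq hqK v hv => hN.exists_extends_grid hQ hq
      (hA q hq (fun h => hqK (.inr h)) fun h => hqK (.inl h))
      (hB q hq (fun h => hqK (.inr h)) fun h => hqK (.inl h)) hv
  exact ⟨v, fun q h => (hvK q (.inl h)).trans (hv₀p h),
    fun q hq => (hvK q (.inr hq)).trans (hv₀Z hq), hv⟩

end MiddleExactness

section Support

variable {S : Type} [LinearOrder S]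

theorem IsIdeal.lt_of_mem_of_notMem {I : Set S} (hI : IsIdeal I) {a b : S} (ha : a ∈ I)
    (hb : b ∉ I) : a < b :=
  lt_of_not_ge fun h => hb (hI _ _ h ha)

theorem IsFilter.lt_of_notMem_of_mem {F : Set S} (hF : IsFilter F) {a b : S} (ha : a ∉ F)
    (hb : b ∈ F) : a < b :=
  lt_of_not_ge fun h => ha (hF _ _ h hb)

theorem map_ne_zero_of_ge {P : Type} [Preorder P] {N : PersistenceModule k P} {x y : P}
    (h : x ≤ y) (h' : y ≤ x) {m : N.V x} (hm : m ≠ 0) : N.map h m ≠ 0 := fun h0 =>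
  hm (by rw [← map_self N (h.trans h') m, ← map_map N h h', h0, map_zero])

theorem map_eq_zero_of_le {P : Type} [Preorder P] {N : PersistenceModule k P} {x y z : P}
    (hxy : x ≤ y) (hyz : y ≤ z) {m : N.V x} (h : N.map hxy m = 0) :
    N.map (hxy.trans hyz) m = 0 := by
  rw [← map_map N hxy hyz, h, map_zero]

variable {T : Type} [LinearOrder T] {Q : Set (S × T)} (hQ : IsUpperSet Q)

theorem right_mono (q : Q) : Monotone (right hQ q) := fun _ _ h => ⟨sup_le_sup_left h _, le_rfl⟩

theorem up_mono (q : Q) : Monotone (up hQ q) := fun _ _ h => ⟨le_rfl, sup_le_sup_left h _⟩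

theorem right_le {q r : Q} (h : q ≤ r) : right hQ q r.1.1 ≤ r := ⟨sup_le h.1 le_rfl, h.2⟩

theorem up_le {q r : Q} (h : q ≤ r) : up hQ q r.1.2 ≤ r := ⟨h.1, sup_le h.2 le_rfl⟩

include hQ in
theorem directedOn_preimage_prod (A : Set S) (B : Set T) :
    DirectedOn (· ≤ ·) {q : Q | (q : S × T) ∈ A ×ˢ B} := fun q hq r hr =>
  ⟨⟨q.1 ⊔ r.1, hQ le_sup_left q.2⟩, ⟨sup_ind _ _ hq.1 hr.1, sup_ind _ _ hq.2 hr.2⟩,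
    le_sup_left (a := q.1), le_sup_right (a := q.1)⟩

variable {N : PersistenceModule k Q} {p : Q} {m : N.V p}

variable (m) in
/-- The first coordinates up to which `m` can be pushed to the right without vanishing. -/
def rightSupport : Set S := {s | N.map (le_right hQ p s) m ≠ 0}

variable (m) in
/-- The second coordinates up to which `m` can be pushed upwards without vanishing. -/
def upSupport : Set T := {t | N.map (le_up hQ p t) m ≠ 0}

theorem isIdeal_rightSupport : IsIdeal (rightSupport hQ m) := fun _ _ hst =>
  mt (map_eq_zero_of_le (le_right hQ p _) (right_mono hQ p hst))

theorem isIdeal_upSupport : IsIdeal (upSupport hQ m) := fun _ _ hst =>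
  mt (map_eq_zero_of_le (le_up hQ p _) (up_mono hQ p hst))

theorem fst_mem_rightSupport (hm : m ≠ 0) : p.1.1 ∈ rightSupport hQ m :=
  map_ne_zero_of_ge _ (right_le hQ le_rfl) hm

theorem snd_mem_upSupport (hm : m ≠ 0) : p.1.2 ∈ upSupport hQ m :=
  map_ne_zero_of_ge _ (up_le hQ le_rfl) hm

theorem map_eq_zero_of_fst_notMem_rightSupport {q : Q} (h : p ≤ q)
    (hq : q.1.1 ∉ rightSupport hQ m) : N.map h m = 0 :=
  map_eq_zero_of_le _ (right_le hQ h) (not_not.1 hq)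

theorem map_eq_zero_of_snd_notMem_upSupport {q : Q} (h : p ≤ q)
    (hq : q.1.2 ∉ upSupport hQ m) : N.map h m = 0 :=
  map_eq_zero_of_le _ (up_le hQ h) (not_not.1 hq)

end Support

section BlockSummands

variable {S T : Type} [LinearOrder S] [LinearOrder T] {Q : Set (S × T)}
  {N : PersistenceModule k Q}

/-- `N` has a retract of the form `k_{J ∩ Q}` for a block `J` meeting `Q`. -/
def HasBlockRetract (N : PersistenceModule k Q) : Prop :=
  ∃ (J : Set (S × T)) (hJ : IsBlock J), {q : Q | (q : S × T) ∈ J}.Nonempty ∧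
    IsRetract (intervalModule k {q : Q | (q : S × T) ∈ J} (hJ.isConvex.preimage Q)) N

/-- Left exactness at `a` of the sequences `N_a → N_b ⊕ N_c`, for `b` above `a` and `c` to the
right of `a`. -/
def IsLeftExact (N : PersistenceModule k Q) : Prop :=
  ∀ ⦃a b c : Q⦄ (hab : a ≤ b) (hac : a ≤ c), b.1.1 ≤ a.1.1 → c.1.2 ≤ a.1.2 →
    ∀ n, N.map hab n = 0 → N.map hac n = 0 → n = 0

section DeathBlocks

variable (hQ : IsUpperSet Q) (hN : MiddleExactOn Q N) {p : Q} {m : N.V p} {s₀ : S} {t₀ : T}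
  (hs₀ : s₀ ∉ rightSupport hQ m) (ht₀ : t₀ ∉ upSupport hQ m)
  (hmin : ∀ s ∈ rightSupport hQ m, ∀ n,
    N.map (le_right hQ p s) n = 0 → N.map (le_up hQ p t₀) n = 0 → n = 0)

include hN ht₀ hmin in
theorem map_ne_zero_of_mem_deathBlock {q : Q} (hq : q.1 ∈ rightSupport hQ m ×ˢ upSupport hQ m)
    (h : p ≤ q) : N.map h m ≠ 0 := by
  intro h0
  obtain ⟨n, hnu, hnr⟩ := hN.exists_map_eq (le_up hQ p q.1.2) (le_right hQ p q.1.1) (up_le hQ h)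
    (right_le hQ h) le_rfl le_rfl le_sup_right le_sup_right
    (mb := 0) (mc := N.map (le_right hQ p q.1.1) m) (by rw [map_zero, map_map, h0])
  have hqt : q.1.2 ≤ t₀ := ((isIdeal_upSupport hQ).lt_of_mem_of_notMem hq.2 ht₀).le
  have hnm : n - m = 0 := by
    refine hmin _ hq.1 _ (by rw [map_sub, hnr, sub_self]) ?_
    rw [map_sub, not_not.1 ht₀, sub_zero]
    exact map_eq_zero_of_le _ (up_mono hQ p hqt) hnu
  exact hq.2 (sub_eq_zero.1 hnm ▸ hnu)

include hN hs₀ ht₀ in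
theorem exists_isCompatibleOn_deathBlock [∀ q, FiniteDimensional k (N.V q)] :
    ∃ v : ∀ q, N.V q, v p = m ∧
      (∀ q ∈ {q : Q | q.1 ∉ rightSupport hQ m ×ˢ upSupport hQ m}, v q = 0) ∧
      IsCompatibleOn N Set.univ v := by
  classical
  refine exists_isCompatibleOn_of_forall_finset fun F => ?_
  obtain ⟨v, hvp, hvZ, hv⟩ := hN.exists_isCompatibleOn_grid hQ (p := p) (m := m)
    (A := insert s₀ (F.image fun q => q.1.1)) (B := insert t₀ (F.image fun q => q.1.2))
    (Z := {q : Q | q.1 ∉ rightSupport hQ m ×ˢ upSupport hQ m})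
    (fun q r hqr => mt (And.imp (isIdeal_rightSupport hQ _ _ hqr.1)
      (isIdeal_upSupport hQ _ _ hqr.2)))
    (fun q hq h => (not_and_or.1 hq).elim (map_eq_zero_of_fst_notMem_rightSupport hQ h)
      (map_eq_zero_of_snd_notMem_upSupport hQ h))
    (fun q _ hq _ => ⟨s₀, Finset.mem_insert_self _ _,
      (isIdeal_rightSupport hQ).lt_of_mem_of_notMem (not_not.1 hq).1 hs₀⟩)
    (fun q _ hq _ => ⟨t₀, Finset.mem_insert_self _ _,
      (isIdeal_upSupport hQ).lt_of_mem_of_notMem (not_not.1 hq).2 ht₀⟩)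
  refine ⟨v, (hvp p le_rfl).trans (map_self N _ m), hvZ, hv.mono fun q hq => ?_⟩
  exact ⟨Finset.mem_insert_of_mem (Finset.mem_image_of_mem _ hq.2),
    Finset.mem_insert_of_mem (Finset.mem_image_of_mem _ hq.2)⟩

include hN hs₀ ht₀ hmin in
theorem hasBlockRetract_of_deathBlock [∀ q, FiniteDimensional k (N.V q)] (hm : m ≠ 0) :
    HasBlockRetract N := by
  have hp : p.1 ∈ rightSupport hQ m ×ˢ upSupport hQ m :=
    ⟨fst_mem_rightSupport hQ hm, snd_mem_upSupport hQ hm⟩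
  have hJ : IsBlock (rightSupport hQ m ×ˢ upSupport hQ m) :=
    ⟨⟨p, hp⟩, .inl ⟨_, _, ⟨⟨_, hp.1⟩, (isIdeal_rightSupport hQ).isConvex⟩,
      isIdeal_rightSupport hQ, ⟨⟨_, hp.2⟩, (isIdeal_upSupport hQ).isConvex⟩,
      isIdeal_upSupport hQ, rfl⟩⟩
  obtain ⟨v, hvp, hv0, hv⟩ := exists_isCompatibleOn_deathBlock hQ hN hs₀ ht₀
  have hdir := directedOn_preimage_prod hQ (rightSupport hQ m) (upSupport hQ m)
  have hideal : IsIdeal {q : Q | q.1 ∈ rightSupport hQ m ×ˢ upSupport hQ m} :=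
    fun q r (h : q ≤ r) hr =>
      ⟨isIdeal_rightSupport hQ _ _ h.1 hr.1, isIdeal_upSupport hQ _ _ h.2 hr.2⟩
  refine ⟨_, hJ, ⟨p, hp⟩, isRetract_intervalModule_of_notMem (fun _ _ _ _ => trivial) hideal hdir
    (Set.univ_inter _).symm _ ⟨p, hp⟩ v (fun _ => ⊥) (fun h _ _ => hv _ trivial _ trivial h)
    (fun h _ hr => (hv _ trivial _ trivial h).trans (hv0 _ hr)) (fun h _ n hn => ?_)
    (fun q _ hq => (hq trivial).elim) fun q hq hvq => ?_⟩
  · rw [Submodule.mem_bot] at hn ⊢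
    rw [hn, map_zero]
  · obtain ⟨z, hz, hqz, hpz⟩ := hdir q hq p hp
    refine map_ne_zero_of_mem_deathBlock hQ hN ht₀ hmin hz hpz ?_
    rw [← hvp, hv _ trivial _ trivial, ← hv _ trivial _ trivial hqz, (Submodule.mem_bot k).1 hvq,
      map_zero]

include hQ hN in
theorem hasBlockRetract_of_not_isLeftExact [∀ q, FiniteDimensional k (N.V q)]
    (h : ¬ IsLeftExact N) : HasBlockRetract N := by
  simp only [IsLeftExact, not_forall] at h
  obtain ⟨p, b, c, hpb, hpc, hb, hc, n, hnb, hnc, hn⟩ := h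
  let F (s : S) :=
    LinearMap.ker (N.map (le_right hQ p s)) ⊓ LinearMap.ker (N.map (le_up hQ p b.1.2))
  have hF : Monotone F := fun s s' h => inf_le_inf_right _ fun n hn =>
    map_eq_zero_of_le _ (right_mono hQ p h) hn
  have hcr : c ≤ right hQ p c.1.1 := ⟨le_sup_right, hc⟩
  have hbu : b ≤ up hQ p b.1.2 := ⟨hb, le_sup_right⟩
  have hnF : n ∈ F c.1.1 := ⟨map_eq_zero_of_le hpc hcr hnc, map_eq_zero_of_le hpb hbu hnb⟩
  obtain ⟨s₀, m, ⟨hms, hmt⟩, hm, hmin⟩ := exists_ne_zero_forall_notMem_eq_bot hF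
    ⟨c.1.1, (Submodule.ne_bot_iff _).2 ⟨n, hnF, hn⟩⟩
  refine hasBlockRetract_of_deathBlock hQ hN (not_not.2 hms) (not_not.2 hmt)
    (fun s hs n hns hnt => ?_) hm
  exact (Submodule.mem_bot k).1 (hmin s (fun h => hs h.1) ▸ (⟨hns, hnt⟩ : n ∈ F s))

end DeathBlocks

section VerticalBands

/-- The first coordinates, seen from `p`, over which `m` has a preimage after being pushed
upwards. -/
def verticalBirth {p : Q} (m : N.V p) : Set S :=
  {s | ∃ (q r : Q) (hqr : q ≤ r) (hpr : p ≤ r) (n : N.V q),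
    q.1.1 ≤ s ∧ r.1.1 ≤ p.1.1 ∧ N.map hqr n = N.map hpr m}

variable {p : Q} {m : N.V p}

theorem isFilter_verticalBirth : IsFilter (verticalBirth m) :=
  fun _ _ hst ⟨q, r, hqr, hpr, n, hqs, h⟩ => ⟨q, r, hqr, hpr, n, hqs.trans hst, h⟩

theorem fst_mem_verticalBirth : p.1.1 ∈ verticalBirth m :=
  ⟨p, p, le_rfl, le_rfl, m, le_rfl, le_rfl, rfl⟩

variable (hQ : IsUpperSet Q)

include hQ in
theorem exists_map_eq_map_of_mem_verticalBirth {σ : S} (hσ : σ ∈ verticalBirth m) (t : T) :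
    ∃ (q : Q) (n : N.V q), q.1.1 ≤ σ ∧ t ≤ q.1.2 ∧
      ∀ z, ∀ hqz : q ≤ z, ∀ hpz : p ≤ z, N.map hqz n = N.map hpz m := by
  obtain ⟨q, r, hqr, hpr, n, hqσ, hrp, h⟩ := hσ
  refine ⟨up hQ q (t ⊔ r.1.2), N.map (le_up hQ q _) n, hqσ, le_sup_of_le_right le_sup_left,
    fun z hqz hpz => ?_⟩
  have hrt : r.1.2 ≤ q.1.2 ⊔ (t ⊔ r.1.2) := le_sup_of_le_right le_sup_right
  have hrz : r ≤ z := ⟨hrp.trans hpz.1, hrt.trans hqz.2⟩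
  rw [map_map, ← map_map N hqr hrz, h, map_map]

variable (hN : MiddleExactOn Q N) (hleft : IsLeftExact N) {s₀ : S}
  (hs₀ : s₀ ∉ rightSupport hQ m)
  (hmin : ∀ s ∈ rightSupport hQ m, ∀ n, N.map (le_right hQ p s) n = 0 → n = 0)

include hQ hN hmin in
theorem map_injective_of_verticalBand {a b : Q} (hpa : p ≤ a) (hab : a ≤ b) (ha : a.1.1 ≤ p.1.1)
    (hba : b.1.2 ≤ a.1.2) (hb : b.1.1 ∈ rightSupport hQ m) {n : N.V a} (hn : N.map hab n = 0) :
    n = 0 := by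
  have hpb := hpa.trans hab
  obtain ⟨w, hwa, hwr⟩ := hN.exists_map_eq hpa (le_right hQ p b.1.1) hab (right_le hQ hpb) ha
    le_rfl le_sup_right hba (mb := n) (mc := 0) (by rw [hn, map_zero])
  rw [← hwa, hmin _ hb w hwr, map_zero]

include hQ hN hleft hs₀ hmin in
theorem map_ne_zero_of_verticalBand (hm : m ≠ 0) {q : Q} (hq : q.1.1 ∈ rightSupport hQ m)
    (h : p ≤ q) : N.map h m ≠ 0 := by
  intro h0
  have hu : N.map (le_up hQ p q.1.2) m = 0 :=
    map_injective_of_verticalBand hQ hN hmin (le_up hQ p _) (up_le hQ h) le_rfl le_sup_right hq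
      (by rw [map_map, h0])
  exact hm (hleft (le_up hQ p q.1.2) (le_right hQ p s₀) le_rfl le_rfl m hu (not_not.1 hs₀))

include hQ hN hleft hs₀ in
theorem exists_isCompatibleOn_grid_verticalBand (hm : m ≠ 0) {A : Finset S} (B : Finset T)
    (hpA : p.1.1 ∈ A) (hA : ∀ s ∈ A, s ∈ verticalBirth m) :
    ∃ v : ∀ q, N.V q, v p = m ∧ (∀ q ∈ {q : Q | q.1.1 ∉ rightSupport hQ m}, v q = 0) ∧
      IsCompatibleOn N (grid Q A B) v := by
  classical
  obtain ⟨σ, hσA, hσ⟩ := A.exists_min_image id ⟨_, hpA⟩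
  obtain ⟨q, n, hqσ, hqt, hn⟩ := exists_map_eq_map_of_mem_verticalBirth hQ (hA σ hσA) p.1.2
  let r := up hQ p q.1.2
  let c := right hQ p s₀
  have hqr : q ≤ r := ⟨hqσ.trans (hσ _ hpA), le_sup_right⟩
  have lt_c {s} (hs : s ∈ rightSupport hQ m) : s < c.1.1 :=
    ((isIdeal_rightSupport hQ).lt_of_mem_of_notMem hs hs₀).trans_le le_sup_right
  have hZ : IsUpperSet {z : Q | z.1.1 ∉ rightSupport hQ m} :=
    fun z z' hz => mt (isIdeal_rightSupport hQ _ _ hz.1)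
  have hnZ (z : Q) (hz : z.1.1 ∉ rightSupport hQ m) (hqz : q ≤ z) : N.map hqz n = 0 := by
    have hpz : p ≤ z := ⟨((isIdeal_rightSupport hQ).lt_of_mem_of_notMem
      (fst_mem_rightSupport hQ hm) hz).le, hqt.trans hqz.2⟩
    rw [hn z hqz hpz, map_eq_zero_of_fst_notMem_rightSupport hQ hpz hz]
  let A' := insert c.1.1 A
  let B' := insert r.1.2 (insert p.1.2 B)
  have hB (z : Q) (hzG : z ∈ grid Q A' B') (hz : ¬ z.1.1 ∉ rightSupport hQ m) (hqz : ¬ q ≤ z) :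
      z.1.2 < r.1.2 := by
    have hzA : z.1.1 ∈ A := (Finset.mem_insert.1 hzG.1).resolve_left (lt_c (not_not.1 hz)).ne
    exact lt_of_not_ge fun h => hqz ⟨hqσ.trans (hσ _ hzA), le_sup_right.trans h⟩
  obtain ⟨v, hvq, hv0, hv⟩ := hN.exists_isCompatibleOn_grid hQ (p := q) (m := n) hZ hnZ
    (fun z _ hz _ => ⟨c.1.1, Finset.mem_insert_self _ A, lt_c (not_not.1 hz)⟩)
    (fun z hzG hz hqz => ⟨r.1.2, Finset.mem_insert_self _ (insert p.1.2 B), hB z hzG hz hqz⟩)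
  have hpG : p ∈ grid Q A' B' := ⟨Finset.mem_insert_of_mem hpA, by simp [B']⟩
  have hrG : r ∈ grid Q A' B' := ⟨Finset.mem_insert_of_mem hpA, Finset.mem_insert_self _ _⟩
  have hcG : c ∈ grid Q A' B' := ⟨Finset.mem_insert_self _ _, hpG.2⟩
  have hvp : v p - m = 0 := by
    refine hleft (le_up hQ p q.1.2) (le_right hQ p s₀) le_rfl le_rfl _ ?_ ?_
    · rw [map_sub, hv p hpG r hrG, hvq r hqr, hn r hqr (le_up hQ p _), sub_self]
    · rw [map_sub, hv p hpG c hcG, hv0 c fun h => (lt_c h).false, not_not.1 hs₀, sub_self]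
  exact ⟨v, sub_eq_zero.1 hvp, hv0, hv.mono fun z hz => ⟨Finset.mem_insert_of_mem hz.1,
    Finset.mem_insert_of_mem (Finset.mem_insert_of_mem hz.2)⟩⟩

include hQ hN hleft hs₀ in
theorem exists_isCompatibleOn_verticalBand [∀ q, FiniteDimensional k (N.V q)] (hm : m ≠ 0) :
    ∃ v : ∀ q, N.V q, v p = m ∧ (∀ q ∈ {q : Q | q.1.1 ∉ rightSupport hQ m}, v q = 0) ∧
      IsCompatibleOn N {q | q.1.1 ∈ verticalBirth m} v := by
  classical
  refine exists_isCompatibleOn_of_forall_finset fun F => ?_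
  let A : Finset S := insert p.1.1 ({z ∈ F | z.1.1 ∈ verticalBirth m}.image fun z => z.1.1)
  have hA : ∀ s ∈ A, s ∈ verticalBirth m := by
    simp only [A, Finset.forall_mem_insert, Finset.forall_mem_image, Finset.mem_filter]
    exact ⟨fst_mem_verticalBirth, fun _ h => h.2⟩
  obtain ⟨v, hvp, hv0, hv⟩ := exists_isCompatibleOn_grid_verticalBand hQ hN hleft hs₀ hm
    (F.image fun z => z.1.2) (Finset.mem_insert_self _ _) hA
  refine ⟨v, hvp, hv0, hv.mono fun z hz => ⟨?_, Finset.mem_image_of_mem _ hz.2⟩⟩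
  exact Finset.mem_insert_of_mem (Finset.mem_image_of_mem _ (Finset.mem_filter.2 ⟨hz.2, hz.1⟩))

variable (m) in
/-- The part of `N_q` that comes from the left of the vertical band. -/
def leftOfBand (q : Q) : Submodule k (N.V q) :=
  ⨆ q' : {q' // q' ≤ q ∧ q'.1.1 ∉ verticalBirth m}, LinearMap.range (N.map q'.2.1)

theorem map_mem_leftOfBand {q r : Q} (h : q ≤ r) {n : N.V q} (hn : n ∈ leftOfBand m q) :
    N.map h n ∈ leftOfBand m r := by
  refine (iSup_le fun q' => ?_ : leftOfBand m q ≤ (leftOfBand m r).comap (N.map h)) hn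
  rintro _ ⟨n', rfl⟩
  exact Submodule.mem_iSup_of_mem ⟨q'.1, q'.2.1.trans h, q'.2.2⟩ ⟨n', (map_map N _ h n').symm⟩

theorem leftOfBand_eq_top {q : Q} (hq : q.1.1 ∉ verticalBirth m) : leftOfBand m q = ⊤ :=
  eq_top_iff.2 fun n _ => Submodule.mem_iSup_of_mem ⟨q, le_rfl, hq⟩ ⟨n, map_self N _ n⟩

include hQ in
theorem exists_map_eq_of_mem_leftOfBand {q : Q} {x : N.V q} (hx0 : x ≠ 0)
    (hx : x ∈ leftOfBand m q) :
    ∃ (q' : Q) (h : q' ≤ q) (n : N.V q'), q'.1.1 ∉ verticalBirth m ∧ N.map h n = x := by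
  have hdir : Directed (· ≤ ·) fun q' : {q' // q' ≤ q ∧ q'.1.1 ∉ verticalBirth m} =>
      LinearMap.range (N.map q'.2.1) := by
    have map_le {a b : Q} (hab : a ≤ b) (hb : b ≤ q) :
        LinearMap.range (N.map (hab.trans hb)) ≤ LinearMap.range (N.map hb) := by
      rintro _ ⟨n, rfl⟩
      exact ⟨N.map hab n, map_map N hab hb n⟩
    rintro ⟨a, ha⟩ ⟨b, hb⟩
    let z : Q := ⟨a.1 ⊔ b.1, hQ le_sup_left a.2⟩
    have hzq : z ≤ q := sup_le (a := a.1) ha.1 hb.1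
    exact ⟨⟨z, hzq, sup_ind (p := (· ∉ verticalBirth m)) _ _ ha.2 hb.2⟩,
      map_le (le_sup_left (a := a.1)) hzq, map_le (le_sup_right (a := a.1)) hzq⟩
  obtain ⟨⟨q', hq'q, hq'⟩, n, hn⟩ := exists_mem_of_mem_iSup_of_directed hdir hx0 hx
  exact ⟨q', hq'q, n, hq', hn⟩

include hQ hN hleft hs₀ hmin in
theorem notMem_leftOfBand (hm : m ≠ 0) {v : ∀ q, N.V q} (hvp : v p = m)
    (hv : IsCompatibleOn N {q | q.1.1 ∈ verticalBirth m} v) {q : Q}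
    (hqU : q.1.1 ∈ verticalBirth m) (hqD : q.1.1 ∈ rightSupport hQ m) : v q ∉ leftOfBand m q := by
  intro hmem
  let r := up hQ p q.1.2
  let z := right hQ r q.1.1
  have hqz : q ≤ z := ⟨le_sup_right, le_sup_right⟩
  have hpz : p ≤ z := ⟨le_sup_left, le_sup_left⟩
  have hvz : N.map hqz (v q) = N.map hpz m := by
    have hzU := isFilter_verticalBirth _ _ hqz.1 hqU
    rw [hv _ hqU _ hzU, ← hvp, hv _ fst_mem_verticalBirth _ hzU]
  have hzD : z.1.1 ∈ rightSupport hQ m := sup_ind _ _ (fst_mem_rightSupport hQ hm) hqD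
  have hvq : v q ≠ 0 := fun h => map_ne_zero_of_verticalBand hQ hN hleft hs₀ hmin hm hzD hpz
    (by rw [← hvz, h, map_zero])
  obtain ⟨q', hq'q, n, hq', hn⟩ := exists_map_eq_of_mem_leftOfBand hQ hvq hmem
  have hq'p : q'.1.1 < p.1.1 := isFilter_verticalBirth.lt_of_notMem_of_mem hq' fst_mem_verticalBirth
  have hq'r : q' ≤ r := ⟨hq'p.le, hq'q.2.trans le_sup_right⟩
  have h0 : N.map hq'r n - N.map (le_up hQ p q.1.2) m = 0 :=
    map_injective_of_verticalBand hQ hN hmin (le_up hQ p _) (le_right hQ r q.1.1) le_rfl le_rfl hzD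
      (by rw [map_sub, map_map, map_map, ← map_map N hq'q hqz, hn, hvz, sub_self])
  exact hq' ⟨q', r, hq'r, le_up hQ p _, n, le_rfl, le_rfl, sub_eq_zero.1 h0⟩

include hQ hN hleft hs₀ hmin in
theorem hasBlockRetract_of_verticalBand [∀ q, FiniteDimensional k (N.V q)] (hm : m ≠ 0) :
    HasBlockRetract N := by
  have hp : p.1.1 ∈ verticalBirth m ∩ rightSupport hQ m :=
    ⟨fst_mem_verticalBirth, fst_mem_rightSupport hQ hm⟩
  have hJ : IsBlock ((verticalBirth m ∩ rightSupport hQ m) ×ˢ (Set.univ : Set T)) :=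
    ⟨⟨p, hp, trivial⟩, .inr (.inr (.inl ⟨_, ⟨⟨_, hp⟩, fun _ _ _ hxy hyz hx hz =>
      ⟨isFilter_verticalBirth _ _ hxy hx.1, isIdeal_rightSupport hQ _ _ hyz hz.2⟩⟩, rfl⟩))⟩
  obtain ⟨v, hvp, hv0, hv⟩ := exists_isCompatibleOn_verticalBand hQ hN hleft hs₀ hm
  have hdir : DirectedOn (· ≤ ·) {q : Q | q.1.1 ∈ rightSupport hQ m} := by
    simpa using directedOn_preimage_prod hQ (rightSupport hQ m) Set.univ
  have hU : IsFilter {q : Q | q.1.1 ∈ verticalBirth m} :=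
    fun q r (h : q ≤ r) => isFilter_verticalBirth _ _ h.1
  have hD : IsIdeal {q : Q | q.1.1 ∈ rightSupport hQ m} :=
    fun q r (h : q ≤ r) => isIdeal_rightSupport hQ _ _ h.1
  refine ⟨_, hJ, ⟨p, hp, trivial⟩, isRetract_intervalModule_of_notMem hU hD hdir
    (by ext; simp) _ ⟨p, hp, trivial⟩ v (leftOfBand m)
    (fun {q r} h hq _ => hv _ hq.1.1 _ (hU _ _ h hq.1.1) h)
    (fun {q r} h hq hr => (hv _ hq.1.1 _ (hU _ _ h hq.1.1) h).trans (hv0 _ hr))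
    (fun h _ n hn => map_mem_leftOfBand h hn) (fun q _ => leftOfBand_eq_top)
    fun q hq => notMem_leftOfBand hQ hN hleft hs₀ hmin hm hvp hv hq.1.1 hq.1.2⟩

include hQ hN in
theorem hasBlockRetract_of_map_eq_zero [∀ q, FiniteDimensional k (N.V q)] (hleft : IsLeftExact N)
    {b : Q} (hpb : p ≤ b) (hb : b.1.2 ≤ p.1.2) {n : N.V p} (hn : n ≠ 0) (hn0 : N.map hpb n = 0) :
    HasBlockRetract N := by
  let F (s : S) := LinearMap.ker (N.map (le_right hQ p s))
  have hF : Monotone F := fun s s' h n hn => map_eq_zero_of_le _ (right_mono hQ p h) hn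
  have hbr : b ≤ right hQ p b.1.1 := ⟨le_sup_right, hb⟩
  have hnF : n ∈ F b.1.1 := map_eq_zero_of_le hpb hbr hn0
  obtain ⟨s₀, m, hms, hm, hmin⟩ := exists_ne_zero_forall_notMem_eq_bot hF
    ⟨b.1.1, (Submodule.ne_bot_iff _).2 ⟨n, hnF, hn⟩⟩
  refine hasBlockRetract_of_verticalBand hQ hN hleft (not_not.2 hms) (fun s hs n hns => ?_) hm
  exact (Submodule.mem_bot k).1 (hmin s (fun h => hs h) ▸ (hns : n ∈ F s))

end VerticalBands

section Swap

/-- The reflection of `N` in the diagonal. -/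
def swapModule (N : PersistenceModule k Q) :
    PersistenceModule k (Prod.swap ⁻¹' Q : Set (T × S)) where
  V q := N.V ⟨q.1.swap, q.2⟩
  map h := N.map ⟨h.2, h.1⟩
  map_refl _ := N.map_refl _
  map_trans _ _ := N.map_trans _ _

theorem MiddleExactOn.swapModule (hN : MiddleExactOn Q N) :
    MiddleExactOn (Prod.swap ⁻¹' Q) (swapModule N) :=
  fun x x' y y' hx hy ha hb hc hd mb mc h =>
    let ⟨n, hnc, hnb⟩ := hN y y' x x' hy hx ha hc hb hd mc mb h.symm
    ⟨n, hnb, hnc⟩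

theorem IsLeftExact.swapModule (hN : IsLeftExact N) : IsLeftExact (swapModule N) :=
  fun _ _ _ hab hac hb hc n hnb hnc => hN ⟨hac.2, hac.1⟩ ⟨hab.2, hab.1⟩ hc hb n hnc hnb

theorem IsBlock.preimage_swap {J : Set (T × S)} (hJ : IsBlock J) :
    IsBlock (Prod.swap ⁻¹' J : Set (S × T)) := by
  obtain ⟨⟨p, hp⟩, h⟩ := hJ
  refine ⟨⟨p.swap, hp⟩, ?_⟩
  obtain ⟨A, B, hA, hA', hB, hB', rfl⟩ | ⟨A, B, hA, hA', hB, hB', rfl⟩ | ⟨A, hA, rfl⟩ |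
    ⟨B, hB, rfl⟩ := h
  · exact .inl ⟨B, A, hB, hB', hA, hA', Set.preimage_swap_prod _ _⟩
  · exact .inr (.inl ⟨B, A, hB, hB', hA, hA', Set.preimage_swap_prod _ _⟩)
  · exact .inr (.inr (.inr ⟨A, hA, Set.preimage_swap_prod _ _⟩))
  · exact .inr (.inr (.inl ⟨B, hB, Set.preimage_swap_prod _ _⟩))

theorem HasBlockRetract.of_swapModule (h : HasBlockRetract (swapModule N)) :
    HasBlockRetract N := by
  obtain ⟨J, hJ, ⟨q, hq⟩, i, r, hri⟩ := h
  refine ⟨Prod.swap ⁻¹' J, hJ.preimage_swap, ⟨⟨q.1.swap, q.2⟩, hq⟩, ?_⟩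
  let σ (q : Q) : (Prod.swap ⁻¹' Q : Set (T × S)) := ⟨q.1.swap, q.2⟩
  have hσ {q r : Q} (h : q ≤ r) : σ q ≤ σ r := ⟨h.2, h.1⟩
  exact ⟨⟨fun q => i.app (σ q), fun h => i.natural (hσ h)⟩,
    ⟨fun q => r.app (σ q), fun h => r.natural (hσ h)⟩, fun q => hri (σ q)⟩

end Swap

section BirthBlocks

variable {C : Type} [AddCommGroup C] [Module k C] (o : ∀ q, N.V q →ₗ[k] C)

/-- The subspace of the apex of a cocone `o` that comes from `A ×ˢ B`. -/
def imageOn (A : Set S) (B : Set T) : Submodule k C :=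
  ⨆ q : {q : Q // (q : S × T) ∈ A ×ˢ B}, LinearMap.range (o q)

variable {A A' : Set S} {B B' : Set T}

theorem apply_mem_imageOn {q : Q} (hA : q.1.1 ∈ A) (hB : q.1.2 ∈ B) (n : N.V q) :
    o q n ∈ imageOn o A B :=
  Submodule.mem_iSup_of_mem ⟨q, hA, hB⟩ ⟨n, rfl⟩

theorem imageOn_mono (hA : A ⊆ A') (hB : B ⊆ B') : imageOn o A B ≤ imageOn o A' B' :=
  iSup_le fun q => le_iSup_of_le ⟨q.1, hA q.2.1, hB q.2.2⟩ le_rfl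

variable (hQ : IsUpperSet Q) (ho : ∀ {q r} (h : q ≤ r) n, o r (N.map h n) = o q n)
  (ho_inj : ∀ q, Function.Injective (o q)) (hN : MiddleExactOn Q N)

variable {o}

include hQ ho in
theorem exists_apply_eq_of_mem_imageOn {x : C} (hx0 : x ≠ 0) (hx : x ∈ imageOn o A B) :
    ∃ q : Q, q.1.1 ∈ A ∧ q.1.2 ∈ B ∧ ∃ n, o q n = x := by
  have range_mono {q r : Q} (h : q ≤ r) : LinearMap.range (o q) ≤ LinearMap.range (o r) := by
    rintro _ ⟨n, rfl⟩
    exact ⟨N.map h n, ho h n⟩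
  have hdir : Directed (· ≤ ·)
      fun q : {q : Q // (q : S × T) ∈ A ×ˢ B} => LinearMap.range (o q) :=
    (directedOn_preimage_prod hQ A B).directed_val.mono_comp (g := fun q => LinearMap.range (o q))
      _ fun _ _ => range_mono
  obtain ⟨q, n, hn⟩ := exists_mem_of_mem_iSup_of_directed hdir hx0 hx
  exact ⟨q, q.2.1, q.2.2, n, hn⟩

include hQ hN ho ho_inj in
theorem exists_apply_eq_of_mem_imageOn_inf {p : Q} {x : C}
    (hxl : x ∈ imageOn o (Set.Iic p.1.1) Set.univ) (hxd : x ∈ imageOn o Set.univ (Set.Iic p.1.2)) :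
    ∃ n, o p n = x := by
  obtain rfl | hx0 := eq_or_ne x 0
  · exact ⟨0, map_zero _⟩
  obtain ⟨q, hq, -, n, rfl⟩ := exists_apply_eq_of_mem_imageOn hQ ho hx0 hxl
  obtain ⟨q', -, hq', n', hn'⟩ := exists_apply_eq_of_mem_imageOn hQ ho hx0 hxd
  let b := up hQ p q.1.2
  let c := right hQ p q'.1.1
  have hqb : q ≤ b := ⟨hq, le_sup_right⟩
  have hqc : q' ≤ c := ⟨le_sup_right, hq'⟩
  obtain ⟨a, hab, -⟩ := hN.exists_map_eq (le_up hQ p q.1.2) (le_right hQ p q'.1.1)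
    (le_right hQ b q'.1.1) ⟨le_rfl, le_sup_left⟩ le_rfl le_rfl le_rfl le_rfl (mb := N.map hqb n)
    (mc := N.map hqc n') (ho_inj _ (by simp only [ho, hn']))
  exact ⟨a, by rw [← ho (le_up hQ p _) a, hab, ho]⟩

variable (o) in
/-- The first coordinates from which `c` comes. -/
def leftBirth (c : C) : Set S := {s | c ∈ imageOn o (Set.Iic s) Set.univ}

variable (o) in
/-- The second coordinates from which `c` comes. -/
def lowerBirth (c : C) : Set T := {t | c ∈ imageOn o Set.univ (Set.Iic t)}

variable {c : C} {p : Q} {m : N.V p}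

theorem isFilter_leftBirth : IsFilter (leftBirth o c) := fun _ _ hst hc =>
  imageOn_mono o (Set.Iic_subset_Iic.2 hst) le_rfl hc

theorem isFilter_lowerBirth : IsFilter (lowerBirth o c) := fun _ _ hst hc =>
  imageOn_mono o le_rfl (Set.Iic_subset_Iic.2 hst) hc

theorem fst_mem_leftBirth : p.1.1 ∈ leftBirth o (o p m) :=
  apply_mem_imageOn o Set.self_mem_Iic (Set.mem_univ _) m

theorem snd_mem_lowerBirth : p.1.2 ∈ lowerBirth o (o p m) :=
  apply_mem_imageOn o (Set.mem_univ _) Set.self_mem_Iic m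

variable (hmin : ∀ s ∉ leftBirth o (o p m), ∀ n,
  o p n ∈ imageOn o (Set.Iic s) Set.univ → n = 0)

include hQ hN ho ho_inj hmin in
theorem notMem_imageOn_sup_imageOn (hm : m ≠ 0) :
    o p m ∉ imageOn o (leftBirth o (o p m))ᶜ Set.univ ⊔
      imageOn o Set.univ (lowerBirth o (o p m))ᶜ := by
  intro h
  obtain ⟨x, hx, y, hy, hxy⟩ := Submodule.mem_sup.1 h
  have hxl : x ∈ imageOn o (Set.Iic p.1.1) Set.univ :=
    imageOn_mono o (fun _ h => (isFilter_leftBirth.lt_of_notMem_of_mem h fst_mem_leftBirth).le)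
      le_rfl hx
  have hyd : y ∈ imageOn o Set.univ (Set.Iic p.1.2) :=
    imageOn_mono o le_rfl
      (fun _ h => (isFilter_lowerBirth.lt_of_notMem_of_mem h snd_mem_lowerBirth).le) hy
  have hxd : x ∈ imageOn o Set.univ (Set.Iic p.1.2) :=
    eq_sub_of_add_eq hxy ▸ sub_mem snd_mem_lowerBirth hyd
  obtain ⟨n, rfl⟩ := exists_apply_eq_of_mem_imageOn_inf hQ ho ho_inj hN hxl hxd
  have hn : o p n = 0 := by
    by_contra hn
    obtain ⟨q, hq, -, n', hn'⟩ := exists_apply_eq_of_mem_imageOn hQ ho hn hx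
    exact hn (by rw [hmin _ hq n (hn' ▸ fst_mem_leftBirth), map_zero])
  obtain rfl : y = o p m := by rw [← hxy, hn, zero_add]
  obtain ⟨q, -, hq, n', hn'⟩ := exists_apply_eq_of_mem_imageOn hQ ho
    ((map_ne_zero_iff _ (ho_inj p)).2 hm) hy
  exact hq (hn' ▸ snd_mem_lowerBirth)

include hQ hN ho ho_inj hmin in
theorem hasBlockRetract_of_birthBlock [∀ q, FiniteDimensional k (N.V q)] (hm : m ≠ 0) :
    HasBlockRetract N := by
  let c := o p m
  have hp : p.1 ∈ leftBirth o c ×ˢ lowerBirth o c := ⟨fst_mem_leftBirth, snd_mem_lowerBirth⟩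
  have hJ : IsBlock (leftBirth o c ×ˢ lowerBirth o c) :=
    ⟨⟨p, hp⟩, .inr (.inl ⟨_, _, ⟨⟨_, hp.1⟩, isFilter_leftBirth.isConvex⟩, isFilter_leftBirth,
      ⟨⟨_, hp.2⟩, isFilter_lowerBirth.isConvex⟩, isFilter_lowerBirth, rfl⟩)⟩
  have hlift (q : Q) : ∃ n : N.V q, q.1 ∈ leftBirth o c ×ˢ lowerBirth o c → o q n = c := by
    by_cases hq : q.1 ∈ leftBirth o c ×ˢ lowerBirth o c
    · obtain ⟨n, hn⟩ := exists_apply_eq_of_mem_imageOn_inf hQ ho ho_inj hN hq.1 hq.2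
      exact ⟨n, fun _ => hn⟩
    · exact ⟨0, fun h => absurd h hq⟩
  choose φ hφ using hlift
  have hdir : DirectedOn (· ≤ ·) (Set.univ : Set Q) := by
    simpa using directedOn_preimage_prod hQ Set.univ Set.univ
  have hU : IsFilter {q : Q | q.1 ∈ leftBirth o c ×ˢ lowerBirth o c} :=
    fun q r (h : q ≤ r) hq =>
      ⟨isFilter_leftBirth _ _ h.1 hq.1, isFilter_lowerBirth _ _ h.2 hq.2⟩
  refine ⟨_, hJ, ⟨p, hp⟩, isRetract_intervalModule_of_notMem hU (fun _ _ _ _ => trivial) hdir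
    (Set.inter_univ _).symm _ ⟨p, hp⟩ φ (fun q => (imageOn o (leftBirth o c)ᶜ Set.univ ⊔
      imageOn o Set.univ (lowerBirth o c)ᶜ).comap (o q))
    (fun h hq _ => ho_inj _ (by rw [ho, hφ _ hq, hφ _ (hU _ _ h hq)]))
    (fun _ _ hr => (hr trivial).elim)
    (fun h _ n hn => by rwa [Submodule.mem_comap, ho]) (fun q _ hq => ?_) fun q hq hφq => ?_⟩
  · refine eq_top_iff.2 fun n _ => ?_
    obtain hq | hq := not_and_or.1 hq
    · exact Submodule.mem_sup_left (apply_mem_imageOn o hq (Set.mem_univ _) n)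
    · exact Submodule.mem_sup_right (apply_mem_imageOn o (Set.mem_univ _) hq n)
  · rw [Submodule.mem_comap, hφ q hq] at hφq
    exact notMem_imageOn_sup_imageOn hQ ho ho_inj hN hmin hm hφq

include hQ in
theorem exists_injective_cocone (hinj : ∀ {q r : Q} (h : q ≤ r), Function.Injective (N.map h)) :
    ∃ (C : Type) (_ : AddCommGroup C) (_ : Module k C) (o : ∀ q, N.V q →ₗ[k] C),
      (∀ {q r} (h : q ≤ r) n, o r (N.map h n) = o q n) ∧ ∀ q, Function.Injective (o q) := by
  classical
  let f (q r : Q) (h : q ≤ r) : N.V q →ₗ[k] N.V r := N.map h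
  have : DirectedSystem N.V (f · · ·) := ⟨fun q => map_self N _, fun _ _ _ => map_map N⟩
  have : IsDirectedOrder Q := directedOn_univ_iff.1
    (by simpa using directedOn_preimage_prod hQ Set.univ Set.univ)
  refine ⟨Module.DirectLimit N.V f, inferInstance, inferInstance, Module.DirectLimit.of k Q N.V f,
    fun h n => Module.DirectLimit.of_f (hij := h),
    fun q => (injective_iff_map_eq_zero _).2 fun n hn => ?_⟩
  obtain ⟨r, hqr, hr⟩ := Module.DirectLimit.of.zero_exact hn
  exact (map_eq_zero_iff _ (hinj hqr)).1 hr

include hQ hN in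
theorem hasBlockRetract_of_injective [∀ q, FiniteDimensional k (N.V q)]
    (hinj : ∀ {q r : Q} (h : q ≤ r), Function.Injective (N.map h)) (hm : m ≠ 0) :
    HasBlockRetract N := by
  obtain ⟨C, _, _, o, ho, ho_inj⟩ := exists_injective_cocone hQ hinj
  let F (s : S) := (imageOn o (Set.Iic s) Set.univ).comap (o p)
  have hF : Monotone F := fun s s' h =>
    Submodule.comap_mono (imageOn_mono o (Set.Iic_subset_Iic.2 h) le_rfl)
  have hmF : m ∈ F p.1.1 := apply_mem_imageOn o Set.self_mem_Iic (Set.mem_univ _) m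
  obtain ⟨-, m', -, hm', hmin⟩ := exists_ne_zero_forall_notMem_eq_bot hF
    ⟨p.1.1, (Submodule.ne_bot_iff _).2 ⟨m, hmF, hm⟩⟩
  refine hasBlockRetract_of_birthBlock hQ ho ho_inj hN (fun s hs n hn => ?_) hm'
  exact (Submodule.mem_bot k).1 (hmin s hs ▸ (hn : n ∈ F s))

end BirthBlocks

theorem hasBlockRetract_of_ne_zero [hfd : ∀ q, FiniteDimensional k (N.V q)] (hQ : IsUpperSet Q)
    (hN : MiddleExactOn Q N) {p : Q} {m : N.V p} (hm : m ≠ 0) : HasBlockRetract N := by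
  by_contra hblock
  have hleft : IsLeftExact N :=
    not_not.1 fun h => hblock (hasBlockRetract_of_not_isLeftExact hQ hN h)
  have hright {q r : Q} (h : q ≤ r) (hr : r.1.2 ≤ q.1.2) (n) (hn : N.map h n = 0) : n = 0 :=
    not_not.1 fun hn0 => hblock (hasBlockRetract_of_map_eq_zero hQ hN hleft h hr hn0 hn)
  have hup {q r : Q} (h : q ≤ r) (hr : r.1.1 ≤ q.1.1) (n) (hn : N.map h n = 0) : n = 0 := by
    have (q : (Prod.swap ⁻¹' Q : Set (T × S))) : FiniteDimensional k ((swapModule N).V q) :=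
      hfd _
    have hQ' : IsUpperSet (Prod.swap ⁻¹' Q : Set (T × S)) := fun _ _ h => hQ ⟨h.2, h.1⟩
    refine not_not.1 fun hn0 => hblock (.of_swapModule ?_)
    exact hasBlockRetract_of_map_eq_zero hQ' hN.swapModule hleft.swapModule
      (p := ⟨q.1.swap, q.2⟩) (b := ⟨r.1.swap, r.2⟩) ⟨h.2, h.1⟩ hr hn0 hn
  refine hblock (hasBlockRetract_of_injective hQ hN (fun {q r} h => ?_) hm)
  refine (injective_iff_map_eq_zero _).2 fun n hn => hright (le_right hQ q r.1.1) le_rfl n ?_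
  exact hup (right_le hQ h) le_sup_right _ (by rw [map_map, hn])

theorem Indecomposable.exists_isomorphic_intervalModule [∀ q, FiniteDimensional k (N.V q)]
    (hQ : IsUpperSet Q) (hN : MiddleExactOn Q N) (hind : Indecomposable N) :
    ∃ (J : Set (S × T)) (hJ : IsBlock J),
      Isomorphic N (intervalModule k {q : Q | (q : S × T) ∈ J} (hJ.isConvex.preimage Q)) := by
  have ⟨p, m, hm⟩ : ∃ p, ∃ m : N.V p, m ≠ 0 := by simpa [IsZero] using hind.1
  obtain ⟨J, hJ, ⟨q, hq⟩, hJN⟩ := hasBlockRetract_of_ne_zero hQ hN hm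
  have hne : ¬ IsZero (intervalModule k {q : Q | (q : S × T) ∈ J} (hJ.isConvex.preimage Q)) :=
    fun h => one_ne_zero (congrArg Subtype.val (h q (kGen k hq)))
  exact ⟨J, hJ, hind.isomorphic_of_isRetract hJN hne⟩

end BlockSummands

end PMod

open PMod in
theorem stmt4_general {k : Type} [Field k] {S T : Type} [LinearOrder S] [LinearOrder T]
    {Q : Set (S × T)} (hQ : IsUpperSet Q) (N : PersistenceModule k Q)
    (hfd : ∀ q, FiniteDimensional k (N.V q)) (hN : MiddleExactOn Q N) :
    ∃ (ι : Type) (J : ι → Set (S × T)) (hJ : ∀ i, IsBlock (J i)),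
      Isomorphic N (directSum fun i =>
        intervalModule k {q : Q | (q : S × T) ∈ J i} ((hJ i).isConvex.preimage Q)) := by
  obtain ⟨ι, M, hM, hNM⟩ := exists_isomorphic_directSum_indecomposable N
  have hret (i) : IsRetract (M i) N := (isRetract_directSum M i).trans hNM.symm.isRetract
  have hfdM (i q) : FiniteDimensional k ((M i).V q) := (hret i).finiteDimensional q
  choose J hJ hMJ using fun i =>
    (hM i).exists_isomorphic_intervalModule hQ (hN.of_isRetract (hret i))
  exact ⟨ι, J, hJ, hNM.trans (isomorphic_directSum hMJ)⟩

open PMod in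
/-- Theorem 1.4 (upper-triangular case): pointwise finite-dimensional middle exact
modules over the upper-triangular subposet of the plane decompose into restrictions of
block modules together with interval modules on points of the anti-diagonal. -/
theorem stmt4 {k : Type} [Field k] (N : PersistenceModule k ↥upperTbar)
    (hfd : ∀ p, FiniteDimensional k (N.V p)) (hme : MiddleExactSub upperTbar N) :
    ∃ (ι : Type) (I : ι → Set ↥upperTbar) (hI : ∀ i, IsConvex (I i)),
      (∀ i, (∃ J : Set (ℝ × ℝ), IsBlock J ∧ I i = {p : ↥upperTbar | (p : ℝ × ℝ) ∈ J}) ∨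
        (∃ p : ↥upperTbar, (p : ℝ × ℝ).1 + (p : ℝ × ℝ).2 = 0 ∧ I i = {p})) ∧
      Isomorphic N (directSum fun i => intervalModule k (I i) (hI i)) := by
  have hQ : IsUpperSet upperTbar := fun _ _ h hp => le_trans hp (add_le_add h.1 h.2)
  obtain ⟨ι, J, hJ, hNJ⟩ := stmt4_general hQ N hfd hme
  exact ⟨ι, _, _, fun i => .inl ⟨J i, hJ i, rfl⟩, hNJ⟩
end

section
/- Let k be a field, P a poset, and I ⊆ P a directed ideal (I is nonempty, closed under going down, and any two elements of I have a common upper bound in I). Then the constant module k_I : P → Vec_k is an injective persistence module: every monomorphism f : k_I → M of persistence modules over P splits, i.e., there exists g : M → k_I with g ∘ f = id. -/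
/-!
A morphism from `M` to the constant module on an ideal `I` is the same thing as a linear functional
on the colimit of `M` over `I`: being an ideal ensures that extending by zero outside `I` is
compatible with the structure maps. When `I` is directed, this colimit is an exact functor of `M`,
so a monomorphism `M → N` induces an injection of colimits, and functionals extend along injections
of vector spaces. Splitting a monomorphism out of the constant module amounts to extending its
identity morphism.
-/

namespace PMod

section Morphisms

variable {k : Type} [Field k] {P : Type} [Preorder P] {L M N : PersistenceModule k P}

attribute [ext] Hom

namespace Hom

theorem map_app_s5 (f : Hom M N) {x y : P} (h : x ≤ y) (v : M.V x) :
    N.map h (f.app x v) = f.app y (M.map h v) :=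
  LinearMap.congr_fun (f.natural h) v

/-- The identity morphism of a persistence module. -/
protected def id (M : PersistenceModule k P) : Hom M M where
  app _ := LinearMap.id
  natural _ := rfl

/-- Composition of morphisms of persistence modules, in the order of function composition. -/
protected def comp_s5 (g : Hom M N) (f : Hom L M) : Hom L N where
  app x := g.app x ∘ₗ f.app x
  natural h := LinearMap.ext fun v ↦
    (g.map_app_s5 h (f.app _ v)).trans (congrArg (g.app _) (f.map_app_s5 h v))

end Hom

end Morphisms

section Colimit

variable {k : Type} [Field k] {P : Type} [Preorder P] {M N : PersistenceModule k P} {I : Set P}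

namespace PersistenceModule

instance directedSystem (M : PersistenceModule k P) (I : Set P) :
    DirectedSystem (fun i : I ↦ M.V i) (fun _ _ h ↦ M.map h) where
  map_self i v := LinearMap.congr_fun (M.map_refl i) v
  map_map _ _ _ hij hjl v := (LinearMap.congr_fun (M.map_trans hij hjl) v).symm

open Classical in
/-- The colimit of the restriction of a persistence module to a subset of its indexing poset.
`Module.DirectLimit` is a quotient of the direct sum, so this is the colimit even when `I` is not
directed. -/
abbrev colimitOn (M : PersistenceModule k P) (I : Set P) : Type :=
  Module.DirectLimit (fun i : I ↦ M.V i) (fun _ _ h ↦ M.map h)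

open Classical in
/-- The canonical map from the fibre at a point of `I` to the colimit over `I`. -/
noncomputable def toColimitOn (M : PersistenceModule k P) {x : P} (hx : x ∈ I) :
    M.V x →ₗ[k] M.colimitOn I :=
  Module.DirectLimit.of k I (fun i : I ↦ M.V i) (fun _ _ h ↦ M.map h) ⟨x, hx⟩

theorem toColimitOn_map (M : PersistenceModule k P) {x y : P} (hx : x ∈ I) (hy : y ∈ I)
    (hxy : x ≤ y) (v : M.V x) : M.toColimitOn hy (M.map hxy v) = M.toColimitOn hx v := by
  classical
  exact Module.DirectLimit.of_f (f := fun (i j : I) (h : i ≤ j) ↦ M.map h)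
    (i := ⟨x, hx⟩) (j := ⟨y, hy⟩) (hij := hxy)

theorem colimitOn_hom_ext {W : Type*} [AddCommGroup W] [Module k W] {φ ψ : M.colimitOn I →ₗ[k] W}
    (h : ∀ x (hx : x ∈ I) v, φ (M.toColimitOn hx v) = ψ (M.toColimitOn hx v)) : φ = ψ := by
  classical
  exact Module.DirectLimit.hom_ext fun i ↦ LinearMap.ext (h i i.2)

end PersistenceModule

open Classical in
/-- The linear map induced by a morphism of persistence modules on colimits over `I`. -/
noncomputable def Hom.colimitOnMap (f : Hom M N) (I : Set P) : M.colimitOn I →ₗ[k] N.colimitOn I :=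
  Module.DirectLimit.map (fun i : I ↦ f.app i) fun _ _ h ↦ (f.natural h).symm

theorem Hom.colimitOnMap_toColimitOn (f : Hom M N) {x : P} (hx : x ∈ I) (v : M.V x) :
    f.colimitOnMap I (M.toColimitOn hx v) = N.toColimitOn hx (f.app x v) := by
  classical
  exact Module.DirectLimit.map_apply_of (fun i : I ↦ f.app i) _ (i := ⟨x, hx⟩) v

theorem Hom.colimitOnMap_injective (hI : DirectedOn (· ≤ ·) I) (f : Hom M N)
    (hf : ∀ x ∈ I, Function.Injective (f.app x)) : Function.Injective (f.colimitOnMap I) := by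
  classical
  have : IsDirectedOrder I := ⟨directedOn_iff_directed.mp hI⟩
  cases isEmpty_or_nonempty I
  · exact Function.injective_of_subsingleton _
  intro z w hzw
  obtain ⟨⟨x, hx⟩, u, v, rfl, rfl⟩ := Module.DirectLimit.exists_of₂ z w
  change f.colimitOnMap I (M.toColimitOn hx u) = f.colimitOnMap I (M.toColimitOn hx v) at hzw
  change M.toColimitOn hx u = M.toColimitOn hx v
  rw [colimitOnMap_toColimitOn, colimitOnMap_toColimitOn] at hzw
  obtain ⟨⟨y, hy⟩, hxy, huv⟩ := Module.DirectLimit.exists_eq_of_of_eq hzw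
  rw [f.map_app_s5, f.map_app_s5] at huv
  rw [← M.toColimitOn_map hx hy hxy u, hf y hy huv, M.toColimitOn_map]

end Colimit

section IntervalModule

variable {k : Type} [Field k] {P : Type} [Preorder P] {I : Set P}

/-- The identification of the fibre of the interval module at a point of `I` with `k`. -/
noncomputable def intervalFibreEquiv (hI : IsConvex I) {x : P} (hx : x ∈ I) :
    (intervalModule k I hI).V x ≃ₗ[k] k :=
  LinearEquiv.ofTop (kMod k I x) (if_pos hx)

theorem intervalFibreEquiv_map (hI : IsConvex I) {x y : P} (hxy : x ≤ y) (hx : x ∈ I) (hy : y ∈ I)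
    (m : (intervalModule k I hI).V x) :
    intervalFibreEquiv hI hy ((intervalModule k I hI).map hxy m) = intervalFibreEquiv hI hx m :=
  congrArg Subtype.val (dif_pos hy)

theorem subsingleton_intervalFibre (hI : IsConvex I) {x : P} (hx : x ∉ I) :
    Subsingleton ((intervalModule k I hI).V x) where
  allEq a b :=
    Subtype.ext ((kMod_coe_eq_zero k hx a).trans (kMod_coe_eq_zero k hx b).symm)

variable {M N : PersistenceModule k P}

open Classical in
/-- The functional on the colimit of `M` over `I` determined by a morphism from `M` to the interval
module on `I`. -/
noncomputable def Hom.toDualColimit {hI : IsConvex I} (f : Hom M (intervalModule k I hI)) :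
    Module.Dual k (M.colimitOn I) :=
  Module.DirectLimit.lift k I _ _ (fun i ↦ (intervalFibreEquiv hI i.2).toLinearMap ∘ₗ f.app i)
    fun i j hij v ↦ (congrArg (intervalFibreEquiv hI j.2) (f.map_app_s5 hij v).symm).trans
      (intervalFibreEquiv_map hI hij i.2 j.2 (f.app i v))

theorem Hom.toDualColimit_toColimitOn {hI : IsConvex I} (f : Hom M (intervalModule k I hI))
    {x : P} (hx : x ∈ I) (v : M.V x) :
    f.toDualColimit (M.toColimitOn hx v) = intervalFibreEquiv hI hx (f.app x v) := by
  classical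
  exact Module.DirectLimit.lift_of (G := fun i : I ↦ M.V i) (i := ⟨x, hx⟩) _ _ v

theorem Hom.toDualColimit_comp {hI : IsConvex I} (g : Hom N (intervalModule k I hI))
    (f : Hom M N) : (g.comp_s5 f).toDualColimit = g.toDualColimit ∘ₗ f.colimitOnMap I :=
  PersistenceModule.colimitOn_hom_ext fun x hx v ↦ by
    rw [LinearMap.comp_apply, colimitOnMap_toColimitOn, toDualColimit_toColimitOn,
      toDualColimit_toColimitOn]
    rfl

theorem Hom.toDualColimit_injective (hI : IsConvex I) :
    Function.Injective (toDualColimit : Hom M (intervalModule k I hI) → _) := by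
  intro f g hfg
  ext x v
  by_cases hx : x ∈ I
  · apply (intervalFibreEquiv hI hx).injective
    rw [← f.toDualColimit_toColimitOn hx, hfg, g.toDualColimit_toColimitOn hx]
  · have := subsingleton_intervalFibre (k := k) hI hx
    exact Subsingleton.elim _ _

open Classical in
/-- The morphism from `M` to the constant module on an ideal `I` determined by a functional on the
colimit of `M` over `I`. -/
noncomputable def Hom.ofDualColimit (hI : IsIdeal I) (φ : Module.Dual k (M.colimitOn I)) :
    Hom M (intervalModule k I hI.isConvex) where
  app x := if hx : x ∈ I then
      (intervalFibreEquiv hI.isConvex hx).symm.toLinearMap ∘ₗ φ ∘ₗ M.toColimitOn hx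
    else 0
  natural {x y} hxy := by
    ext v
    by_cases hy : y ∈ I
    · have hx : x ∈ I := hI x y hxy hy
      apply (intervalFibreEquiv hI.isConvex hy).injective
      simp only [dif_pos hx, dif_pos hy, LinearMap.comp_apply, LinearEquiv.coe_coe,
        intervalFibreEquiv_map _ hxy hx, LinearEquiv.apply_symm_apply, M.toColimitOn_map hx]
    · have := subsingleton_intervalFibre (k := k) hI.isConvex hy
      exact Subsingleton.elim _ _

theorem Hom.toDualColimit_ofDualColimit (hI : IsIdeal I) (φ : Module.Dual k (M.colimitOn I)) :
    (ofDualColimit hI φ).toDualColimit = φ :=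
  PersistenceModule.colimitOn_hom_ext fun x hx v ↦ by
    simp [toDualColimit_toColimitOn, ofDualColimit, hx]

end IntervalModule

end PMod

open PMod in
theorem stmt5_general {k : Type} [Field k] {P : Type} [Preorder P] {I : Set P}
    (hI : IsIdeal I) (hdir : DirectedOn (· ≤ ·) I) {M N : PersistenceModule k P}
    (f : Hom M N) (hf : ∀ x ∈ I, Function.Injective (f.app x))
    (h : Hom M (intervalModule k I hI.isConvex)) :
    ∃ g : Hom N (intervalModule k I hI.isConvex), g.comp_s5 f = h := by
  have hinj : Function.Injective (f.colimitOnMap I) := f.colimitOnMap_injective hdir hf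
  obtain ⟨r, hr⟩ := LinearMap.exists_leftInverse_of_injective _ (LinearMap.ker_eq_bot.mpr hinj)
  refine ⟨Hom.ofDualColimit hI (h.toDualColimit ∘ₗ r), Hom.toDualColimit_injective _ ?_⟩
  rw [Hom.toDualColimit_comp, Hom.toDualColimit_ofDualColimit, LinearMap.comp_assoc, hr,
    LinearMap.comp_id]

open PMod in
/-- Lemma 2.1: the constant module on a directed ideal is injective. -/
theorem stmt5 {k : Type} [Field k] {P : Type} [PartialOrder P] (I : Set P)
    (hne : I.Nonempty) (hid : IsIdeal I)
    (hdir : ∀ p ∈ I, ∀ q ∈ I, ∃ c ∈ I, p ≤ c ∧ q ≤ c)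
    (M : PersistenceModule k P)
    (f : Hom (intervalModule k I hid.isConvex) M)
    (hf : ∀ x, Function.Injective (f.app x)) :
    ∃ g : Hom M (intervalModule k I hid.isConvex),
      ∀ x, (g.app x).comp (f.app x) = LinearMap.id := by
  obtain ⟨g, hg⟩ := stmt5_general hid hdir f (fun x _ ↦ hf x) (Hom.id _)
  exact ⟨g, fun x ↦ congrFun (congrArg Hom.app hg) x⟩
end

section
/- Let k be a field and P a codirected poset (for every p, q ∈ P there exists c ∈ P with c ≤ p and c ≤ q). Let M be a pointwise finite-dimensional persistence module over P with M_p ≠ 0 for all p ∈ P, such that the structure map M_p → M_q is injective for all p ≤ q. Then there exists a monomorphism k_P → M. If moreover P is also directed, then M has a direct summand isomorphic to k_P. -/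
/-! Below any `p₀` with `M.V p₀` finite-dimensional there is a point `p` at which `finrank M.V`
is minimal, and injectivity makes every structure map into `p` bijective. A nonzero `v : M.V p` thus
has a unique preimage at each point below `p`; by codirectedness these preimages can be pushed
forward to a compatible family of vectors on all of `P`, which vanishes nowhere. This is the
monomorphism `k_P → M`.

If `P` is directed, colimits over `P` preserve monomorphisms. A morphism `N → k_P` is a functional
on the colimit of `N`, so it extends along every monomorphism `N → M`. Extending the identity of
`k_P` splits `k_P → M`. -/

namespace PMod

variable {k : Type} [Field k] {P : Type} [Preorder P] {M N : PersistenceModule k P}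

theorem PersistenceModule.map_id_apply (M : PersistenceModule k P) {x : P} (v : M.V x) :
    M.map (le_refl x) v = v :=
  LinearMap.congr_fun (M.map_refl x) v

theorem PersistenceModule.map_map_apply (M : PersistenceModule k P) {x y z : P} (hxy : x ≤ y)
    (hyz : y ≤ z) (v : M.V x) : M.map hyz (M.map hxy v) = M.map (hxy.trans hyz) v :=
  (LinearMap.congr_fun (M.map_trans hxy hyz) v).symm

theorem Hom.map_app_apply (f : Hom M N) {x y : P} (h : x ≤ y) (v : M.V x) :
    N.map h (f.app x v) = f.app y (M.map h v) :=
  LinearMap.congr_fun (f.natural h) v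

section Splitting

/-- The kernel of a morphism of persistence modules, taken pointwise; it is the complement of the
image of a section of `f`. -/
def Hom.ker (f : Hom M N) : PersistenceModule k P where
  V x := LinearMap.ker (f.app x)
  map {x y} h := (M.map h).restrict fun v (hv : f.app x v = 0) => by
    rw [LinearMap.mem_ker, ← f.map_app_apply, hv, map_zero]
  map_refl x := LinearMap.ext fun v => Subtype.ext (M.map_id_apply v.1)
  map_trans hxy hyz := LinearMap.ext fun v => Subtype.ext (M.map_map_apply hxy hyz v.1).symm

theorem isomorphic_sum2_ker_of_leftInverse (r : Hom M N) (f : Hom N M)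
    (hrf : ∀ x, Function.LeftInverse (r.app x) (f.app x)) : Isomorphic M (sum2 N r.ker) := by
  have sub_mem_ker (x : P) (v : M.V x) : v - f.app x (r.app x v) ∈ LinearMap.ker (r.app x) := by
    rw [LinearMap.mem_ker, map_sub, hrf, sub_self]
  refine ⟨⟨fun x => (r.app x).prod
    ((LinearMap.id - f.app x ∘ₗ r.app x).codRestrict _ (sub_mem_ker x)), ?natural⟩,
    fun x => ⟨?injective, ?surjective⟩⟩
  case natural =>
    intro x y h
    refine LinearMap.ext fun v => Prod.ext (r.map_app_apply h v) (Subtype.ext ?_)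
    change M.map h (v - f.app x (r.app x v)) = M.map h v - f.app y (r.app y (M.map h v))
    rw [map_sub, f.map_app_apply, r.map_app_apply]
  case injective =>
    intro v w hvw
    have hr : r.app x v = r.app x w := congrArg Prod.fst hvw
    have hsub : v - f.app x (r.app x v) = w - f.app x (r.app x w) :=
      congrArg Subtype.val (congrArg Prod.snd hvw)
    rwa [hr, sub_left_inj] at hsub
  case surjective =>
    rintro ⟨n, w, hw : r.app x w = 0⟩
    have hr : r.app x (f.app x n + w) = n := by rw [map_add, hrf, hw, add_zero]
    refine ⟨f.app x n + w, Prod.ext hr (Subtype.ext ?_)⟩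
    change f.app x n + w - f.app x (r.app x (f.app x n + w)) = w
    rw [hr, add_sub_cancel_left]

end Splitting

section Sections

/-- The morphism `k_P → M` sending `1` to a compatible family of vectors of `M`. -/
def homOfSection (s : ∀ x, M.V x) (hs : ∀ {x y} (h : x ≤ y), M.map h (s x) = s y) :
    Hom (constModule k P) M where
  app x := LinearMap.toSpanSingleton k (M.V x) (s x)
  natural {x y} h := LinearMap.ext fun a : k => by
    change M.map h (a • s x) = a • s y
    rw [map_smul, hs]

theorem homOfSection_app_injective {s : ∀ x, M.V x}
    {hs : ∀ {x y} (h : x ≤ y), M.map h (s x) = s y} {x : P} (hx : s x ≠ 0) :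
    Function.Injective ((homOfSection s hs).app x) :=
  smul_left_injective k hx

theorem section_ne_zero_of_injective [IsCodirectedOrder P]
    (hinj : ∀ (p q : P) (h : p ≤ q), Function.Injective (M.map h)) {s : ∀ x, M.V x}
    (hs : ∀ {x y} (h : x ≤ y), M.map h (s x) = s y) {p : P} (hp : s p ≠ 0) (x : P) : s x ≠ 0 := by
  obtain ⟨c, hcp, hcx⟩ := exists_le_le p x
  have hc : s c ≠ 0 := fun h0 => hp (by rw [← hs hcp, h0, map_zero])
  rw [← hs hcx]
  exact (map_ne_zero_iff _ (hinj c x hcx)).mpr hc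

theorem exists_forall_le_map_bijective
    (hinj : ∀ (p q : P) (h : p ≤ q), Function.Injective (M.map h))
    (p₀ : P) [FiniteDimensional k (M.V p₀)] :
    ∃ p, ∀ c (h : c ≤ p), Function.Bijective (M.map h) := by
  let rank (q : Set.Iic p₀) : ℕ := Module.finrank k (M.V q)
  let p : Set.Iic p₀ := Function.argmin rank
  have finite (q : Set.Iic p₀) : FiniteDimensional k (M.V q) :=
    FiniteDimensional.of_injective _ (hinj q p₀ q.2)
  refine ⟨p, fun c h => ?_⟩
  let c' : Set.Iic p₀ := ⟨c, h.trans p.2⟩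
  have := finite p
  have : FiniteDimensional k (M.V c) := finite c'
  have finrank_eq : Module.finrank k (M.V c) = Module.finrank k (M.V p) :=
    (LinearMap.finrank_le_finrank_of_injective (hinj c p h)).antisymm
      (Function.argmin_le rank c')
  exact ⟨hinj c p h,
    (LinearMap.injective_iff_surjective_of_finrank_eq_finrank finrank_eq).mp (hinj c p h)⟩

theorem exists_section_of_forall_le_map_bijective [IsCodirectedOrder P] {p : P}
    (hp : ∀ c (h : c ≤ p), Function.Bijective (M.map h)) (v : M.V p) :
    ∃ s : ∀ x, M.V x, (∀ {x y} (h : x ≤ y), M.map h (s x) = s y) ∧ s p = v := by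
  choose lift map_lift using fun (c : P) (h : c ≤ p) => (hp c h).surjective v
  have map_lift_lift {d c : P} (hdc : d ≤ c) (hcp : c ≤ p) :
      M.map hdc (lift d (hdc.trans hcp)) = lift c hcp :=
    (hp c hcp).injective (by rw [M.map_map_apply, map_lift, map_lift])
  choose c hcx hcp using fun x : P => exists_le_le x p
  let s (x : P) : M.V x := M.map (hcx x) (lift (c x) (hcp x))
  have s_eq {x d : P} (hdx : d ≤ x) (hdp : d ≤ p) : s x = M.map hdx (lift d hdp) := by
    obtain ⟨e, hec, hed⟩ := exists_le_le (c x) d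
    simp only [s, ← map_lift_lift hec, ← map_lift_lift hed, M.map_map_apply]
  refine ⟨s, fun {x y} h => ?_, ?_⟩
  · rw [s_eq ((hcx x).trans h) (hcp x), M.map_map_apply]
  · rw [s_eq le_rfl le_rfl, M.map_id_apply, ← map_lift p le_rfl, M.map_id_apply]

theorem exists_injective_hom_constModule [IsCodirectedOrder P]
    (hfd : Nonempty P → ∃ p, FiniteDimensional k (M.V p))
    (hne : ∀ p, ∃ v : M.V p, v ≠ 0)
    (hinj : ∀ (p q : P) (h : p ≤ q), Function.Injective (M.map h)) :
    ∃ f : Hom (constModule k P) M, ∀ x, Function.Injective (f.app x) := by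
  obtain _ | hP := isEmpty_or_nonempty P
  · exact ⟨⟨isEmptyElim, fun {x} => isEmptyElim x⟩, isEmptyElim⟩
  obtain ⟨p₀, _⟩ := hfd hP
  obtain ⟨p, hp⟩ := exists_forall_le_map_bijective hinj p₀
  obtain ⟨v, hv⟩ := hne p
  obtain ⟨s, hs, rfl⟩ := exists_section_of_forall_le_map_bijective hp v
  exact ⟨homOfSection s hs,
    fun x => homOfSection_app_injective (section_ne_zero_of_injective hinj hs hv x)⟩

end Sections

section Colimits

instance PersistenceModule.directedSystem_s6 (M : PersistenceModule k P) :
    DirectedSystem M.V fun _ _ h => M.map h where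
  map_self _ := M.map_id_apply
  map_map _ _ _ hij hjk := M.map_map_apply hij hjk

/-- The colimit of a persistence module over its indexing poset. -/
abbrev PersistenceModule.Colimit [DecidableEq P] (M : PersistenceModule k P) : Type :=
  Module.DirectLimit M.V fun _ _ h => M.map h

/-- The structure map from the fibre at `x` to the colimit. -/
noncomputable def PersistenceModule.toColimit [DecidableEq P] (M : PersistenceModule k P) (x : P) :
    M.V x →ₗ[k] M.Colimit :=
  Module.DirectLimit.of k P M.V _ x

theorem PersistenceModule.toColimit_map [DecidableEq P] (M : PersistenceModule k P) {x y : P}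
    (h : x ≤ y) (v : M.V x) : M.toColimit y (M.map h v) = M.toColimit x v :=
  Module.DirectLimit.of_f (hij := h)

/-- The map induced on colimits by a morphism of persistence modules. -/
noncomputable def Hom.colimitMap [DecidableEq P] (f : Hom M N) : M.Colimit →ₗ[k] N.Colimit :=
  Module.DirectLimit.map f.app fun _ _ h => (f.natural h).symm

theorem Hom.colimitMap_toColimit [DecidableEq P] (f : Hom M N) {x : P} (v : M.V x) :
    f.colimitMap (M.toColimit x v) = N.toColimit x (f.app x v) :=
  Module.DirectLimit.map_apply_of _ _ _

theorem Hom.colimitMap_injective [DecidableEq P] [IsDirectedOrder P] {f : Hom M N}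
    (hf : ∀ x, Function.Injective (f.app x)) : Function.Injective f.colimitMap := by
  obtain _ | _ := isEmpty_or_nonempty P
  · exact Function.injective_of_subsingleton _
  rw [injective_iff_map_eq_zero]
  intro z hz
  obtain ⟨x, v, rfl⟩ : ∃ x v, M.toColimit x v = z := Module.DirectLimit.exists_of z
  rw [colimitMap_toColimit] at hz
  obtain ⟨y, h, hy⟩ := Module.DirectLimit.of.zero_exact hz
  rw [f.map_app_apply, map_eq_zero_iff _ (hf y)] at hy
  rw [← M.toColimit_map h, hy, map_zero]

/-- The functional on the colimit of `M` corresponding to a morphism `M → k_P`. -/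
noncomputable def Hom.colimitFunctional [DecidableEq P] (g : Hom M (constModule k P)) :
    Module.Dual k M.Colimit :=
  Module.DirectLimit.lift k P M.V _ g.app fun _ _ h v => (g.map_app_apply h v).symm

theorem Hom.colimitFunctional_toColimit [DecidableEq P] (g : Hom M (constModule k P)) {x : P}
    (v : M.V x) : g.colimitFunctional (M.toColimit x v) = g.app x v :=
  Module.DirectLimit.lift_of _ _ _

/-- The morphism `M → k_P` corresponding to a functional on the colimit of `M`. -/
noncomputable def homOfColimitFunctional [DecidableEq P] (φ : Module.Dual k M.Colimit) :
    Hom M (constModule k P) where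
  app x := φ ∘ₗ M.toColimit x
  natural h := LinearMap.ext fun v => congrArg φ (M.toColimit_map h v).symm

theorem exists_extension_to_constModule [IsDirectedOrder P] {f : Hom N M}
    (hf : ∀ x, Function.Injective (f.app x)) (g : Hom N (constModule k P)) :
    ∃ r : Hom M (constModule k P), ∀ x v, r.app x (f.app x v) = g.app x v := by
  classical
  obtain ⟨ρ, hρ⟩ := f.colimitMap.exists_leftInverse_of_injective
    (LinearMap.ker_eq_bot.mpr (Hom.colimitMap_injective hf))
  have ρ_colimitMap (z : N.Colimit) : ρ (f.colimitMap z) = z := LinearMap.congr_fun hρ z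
  refine ⟨homOfColimitFunctional (g.colimitFunctional ∘ₗ ρ), fun x v => ?_⟩
  change g.colimitFunctional (ρ (M.toColimit x (f.app x v))) = g.app x v
  rw [← f.colimitMap_toColimit, ρ_colimitMap, g.colimitFunctional_toColimit]

theorem exists_leftInverse_of_constModule_injective [IsDirectedOrder P]
    {f : Hom (constModule k P) M} (hf : ∀ x, Function.Injective (f.app x)) :
    ∃ r : Hom M (constModule k P), ∀ x, Function.LeftInverse (r.app x) (f.app x) := by
  obtain ⟨r, hr⟩ := exists_extension_to_constModule hf ⟨fun _ => LinearMap.id, fun _ => rfl⟩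
  exact ⟨r, hr⟩

end Colimits

end PMod

open PMod in
theorem stmt6_general {k : Type} [Field k] {P : Type} [Preorder P] [IsCodirectedOrder P]
    (M : PersistenceModule k P)
    (hfd : Nonempty P → ∃ p, FiniteDimensional k (M.V p))
    (hne : ∀ p, ∃ v : M.V p, v ≠ 0)
    (hinj : ∀ (p q : P) (h : p ≤ q), Function.Injective (M.map h)) :
    (∃ f : Hom (constModule k P) M, ∀ x, Function.Injective (f.app x)) ∧
    (IsDirectedOrder P →
      ∃ M'' : PersistenceModule k P, Isomorphic M (sum2 (constModule k P) M'')) := by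
  obtain ⟨f, hf⟩ := exists_injective_hom_constModule hfd hne hinj
  refine ⟨⟨f, hf⟩, fun _ => ?_⟩
  obtain ⟨r, hr⟩ := exists_leftInverse_of_constModule_injective hf
  exact ⟨r.ker, isomorphic_sum2_ker_of_leftInverse r f hr⟩

open PMod in
/-- Lemma 2.2: over a codirected poset, a pointwise finite-dimensional module with
everywhere nonzero fibres and injective structure maps admits a monomorphism from the
constant module; if moreover the poset is directed, the constant module is a summand. -/
theorem stmt6 {k : Type} [Field k] {P : Type} [PartialOrder P]
    (hcodir : ∀ p q : P, ∃ c, c ≤ p ∧ c ≤ q)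
    (M : PersistenceModule k P)
    (hfd : ∀ p, FiniteDimensional k (M.V p))
    (hne : ∀ p, ∃ v : M.V p, v ≠ 0)
    (hinj : ∀ (p q : P) (h : p ≤ q), Function.Injective (M.map h)) :
    (∃ f : Hom (constModule k P) M, ∀ x, Function.Injective (f.app x)) ∧
    ((∀ p q : P, ∃ c, p ≤ c ∧ q ≤ c) →
      ∃ M'' : PersistenceModule k P,
        Isomorphic M (sum2 (constModule k P) M'')) := by
  have : IsCodirectedOrder P := ⟨hcodir⟩
  exact (stmt6_general M (fun ⟨p⟩ => ⟨p, hfd p⟩) hne hinj).imp_right fun h hdir => h ⟨hdir⟩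
end
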